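/- Let k > 1 be a natural number and 1 ≤ p < ∞ with (k−1)p < n. Let Ω ⊂ ℝⁿ be an open set and let φ ∈ W^{k,p}_loc(Ω, ℝⁿ). Then there exists a set S ⊂ Ω with R_{k−1,p}(S) = 0 such that for every non-negative Lebesgue measurable function f : Ω → ℝ one has ∫_Ω f(x) |J(x,φ)| dx = ∫_{ℝⁿ} ( ∑_{x ∈ φ⁻¹{y} ∩ (Ω\S)} f(x) ) dy, where φ is taken to be (the precise representative of) the given Sobolev mapping on Ω \ S and J(x,φ) = det(Dφ(x)) with Dφ(x) the approximate differential. -/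

import Mathlib

open MeasureTheory Filter Metric Set
open scoped ENNReal NNReal Topology

noncomputable section

abbrev Euc (n : ℕ) := EuclideanSpace ℝ (Fin n)

/-- Degree of a multi-index. -/
def mdeg {n : ℕ} (α : Fin n → ℕ) : ℕ := ∑ i, α i

/-- Iterated partial derivative along a list of coordinate directions. -/
def listDeriv {n : ℕ} : List (Fin n) → (Euc n → ℝ) → (Euc n → ℝ)
  | [], η => η
  | i :: l, η => fun x => fderiv ℝ (listDeriv l η) x (EuclideanSpace.single i 1)

/-- The partial derivative `D^α η` associated to a multi-index `α`. -/
def mderiv {n : ℕ} (α : Fin n → ℕ) (η : Euc n → ℝ) : Euc n → ℝ :=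
  listDeriv ((List.finRange n).flatMap fun i => List.replicate (α i) i) η

/-- `g` is the weak derivative `D^α f` on `ℝⁿ`. -/
def IsWeakDeriv {n : ℕ} (α : Fin n → ℕ) (f g : Euc n → ℝ) : Prop :=
  ∀ η : Euc n → ℝ, ContDiff ℝ (⊤ : ℕ∞) η → HasCompactSupport η →
    ∫ x, f x * mderiv α η x = (-1 : ℝ) ^ mdeg α * ∫ x, g x * η x

/-- `g` is the weak derivative `D^α f` on an open set `U`. -/
def IsWeakDerivOn {n : ℕ} (U : Set (Euc n)) (α : Fin n → ℕ) (f g : Euc n → ℝ) : Prop :=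
  ∀ η : Euc n → ℝ, ContDiff ℝ (⊤ : ℕ∞) η → HasCompactSupport η → tsupport η ⊆ U →
    ∫ x in U, f x * mderiv α η x = (-1 : ℝ) ^ mdeg α * ∫ x in U, g x * η x

/-- Membership in the Sobolev space `W^{k,p}(U)`. -/
def MemSobolevOn {n : ℕ} (k : ℕ) (p : ℝ) (U : Set (Euc n)) (f : Euc n → ℝ) : Prop :=
  MemLp f (ENNReal.ofReal p) (volume.restrict U) ∧
  ∀ α : Fin n → ℕ, mdeg α ≤ k → ∃ g : Euc n → ℝ,
    MemLp g (ENNReal.ofReal p) (volume.restrict U) ∧ IsWeakDerivOn U α f g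

/-- Membership in the local Sobolev space `W^{k,p}_loc(Ω)`. -/
def MemSobolevLoc {n : ℕ} (k : ℕ) (p : ℝ) (Ω : Set (Euc n)) (f : Euc n → ℝ) : Prop :=
  ∀ U : Set (Euc n), IsOpen U → Bornology.IsBounded U → closure U ⊆ Ω →
    MemSobolevOn k p U f

/-- The normalizing constant `γ(a)` of the Riesz kernel. -/
def rieszGamma (n : ℕ) (a : ℝ) : ℝ :=
  Real.pi ^ ((n : ℝ) / 2) * (2 : ℝ) ^ a * Real.Gamma (a / 2) / Real.Gamma (((n : ℝ) - a) / 2)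

/-- The Riesz potential `I_a * g`, valued in `ℝ≥0∞`. -/
def rieszPot {n : ℕ} (a : ℝ) (g : Euc n → ℝ) (x : Euc n) : ℝ≥0∞ :=
  (ENNReal.ofReal (rieszGamma n a))⁻¹ *
    ∫⁻ y, ENNReal.ofReal (g y) * ENNReal.ofReal (‖x - y‖ ^ (a - (n : ℝ)))

/-- The Riesz capacity `R_{a,p}`. -/
def rieszCap {n : ℕ} (a p : ℝ) (S : Set (Euc n)) : ℝ≥0∞ :=
  ⨅ (g : Euc n → ℝ) (_ : MemLp g (ENNReal.ofReal p) volume ∧ (∀ x, 0 ≤ g x) ∧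
      ∀ x ∈ S, 1 ≤ rieszPot a g x),
    ∫⁻ y, ENNReal.ofReal (g y) ^ p

/-- The precise representative of a (vector-valued) locally integrable function. -/
def preciseRepV {n : ℕ} {F : Type*} [NormedAddCommGroup F] [NormedSpace ℝ F]
    (f : Euc n → F) (x : Euc n) : F :=
  letI := Classical.propDecidable
  if h : ∃ L : F, Tendsto (fun ε : ℝ => ⨍ y in ball x ε, f y) (𝓝[>] (0:ℝ)) (𝓝 L)
  then h.choose else 0

/-- The precise representative of a real-valued locally integrable function. -/
def preciseRep {n : ℕ} (f : Euc n → ℝ) (x : Euc n) : ℝ := preciseRepV f x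

/-- The Hardy–Littlewood maximal function (of an `ℝ≥0∞`-valued integrand). -/
def maxFn {n : ℕ} (g : Euc n → ℝ≥0∞) (x : Euc n) : ℝ≥0∞ :=
  ⨆ (r : ℝ) (_ : 0 < r), (volume (ball x r))⁻¹ * ∫⁻ y in ball x r, g y

/-- `x` is a density point of `S`. -/
def DensityPt {n : ℕ} (S : Set (Euc n)) (x : Euc n) : Prop :=
  Tendsto (fun r : ℝ => volume (S ∩ ball x r) / volume (ball x r)) (𝓝[>] (0:ℝ)) (𝓝 1)

/-- `L` is the approximate differential of `φ` at `x₀`, relative to the domain `A`. -/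
def HasApproxDerivAt {n : ℕ} (A : Set (Euc n)) (φ : Euc n → Euc n)
    (L : Euc n →L[ℝ] Euc n) (x₀ : Euc n) : Prop :=
  DensityPt A x₀ ∧ ∀ ε : ℝ, 0 < ε →
    DensityPt {x | x ∈ A ∧ ‖φ x - φ x₀ - L (x - x₀)‖ ≤ ε * ‖x - x₀‖} x₀

end

/-- Area formula on a piece. -/
def AreaProp {n : ℕ} (v : Euc n → Euc n) (D : Euc n → (Euc n →L[ℝ] Euc n)) (F : Euc n → ℝ≥0∞)
    (s : Set (Euc n)) : Prop :=
  AEMeasurable (fun y => ∑' x : ↥(v ⁻¹' {y} ∩ s), F ↑x) volume ∧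
    ∫⁻ y, ∑' x : ↥(v ⁻¹' {y} ∩ s), F ↑x = ∫⁻ x in s, F x * ENNReal.ofReal |(D x).det|

theorem areaProp_null {n : ℕ} {v : Euc n → Euc n} {D : Euc n → (Euc n →L[ℝ] Euc n)}
    {F : Euc n → ℝ≥0∞} {s : Set (Euc n)} (him : volume (v '' s) = 0)
    (hint : ∫⁻ x in s, F x * ENNReal.ofReal |(D x).det| = 0) : AreaProp v D F s := by
  have h0 : (fun y => ∑' x : ↥(v ⁻¹' {y} ∩ s), F ↑x) =ᵐ[volume] fun _ => 0 := by
    have : ∀ᵐ y ∂(volume : Measure (Euc n)), y ∉ v '' s := measure_eq_zero_iff_ae_notMem.1 him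
    filter_upwards [this] with y hy
    have : IsEmpty ↥(v ⁻¹' {y} ∩ s) := by
      refine ⟨fun x => hy ⟨x, x.2.2, x.2.1⟩⟩
    simp
  refine ⟨⟨_, measurable_const, h0⟩, ?_⟩
  rw [lintegral_congr_ae h0, hint]; simp

theorem areaProp_inj {n : ℕ} {v : Euc n → Euc n} {D : Euc n → (Euc n →L[ℝ] Euc n)}
    {F : Euc n → ℝ≥0∞} (hF : Measurable F) {s : Set (Euc n)} (hs : MeasurableSet s)
    (hD : ∀ x ∈ s, HasFDerivWithinAt v (D x) s x) (hv : InjOn v s) : AreaProp v D F s := by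
  have hem := measurableEmbedding_of_fderivWithin hs hD hv
  have him : MeasurableSet (v '' s) := measurable_image_of_fderivWithin hs hD hv
  obtain ⟨g, hg, hgF⟩ := hem.exists_measurable_extend (g := s.domRestrict F)
    (hF.comp measurable_subtype_coe) (fun _ => ⟨0⟩)
  have hgF' : ∀ x ∈ s, g (v x) = F x := fun x hx => congrFun hgF ⟨x, hx⟩
  have key : (fun y => ∑' x : ↥(v ⁻¹' {y} ∩ s), F ↑x) = (v '' s).indicator g := by
    funext y
    by_cases hy : y ∈ v '' s
    · obtain ⟨x, hx, rfl⟩ := hy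
      rw [indicator_of_mem (mem_image_of_mem v hx), hgF' x hx]
      have : v ⁻¹' {v x} ∩ s = {x} := by
        ext z
        simp only [mem_inter_iff, mem_preimage, mem_singleton_iff]
        constructor
        · rintro ⟨h1, h2⟩; exact hv h2 hx h1
        · rintro rfl; exact ⟨rfl, hx⟩
      rw [this]
      simp
    · rw [indicator_of_notMem hy]
      have : IsEmpty ↥(v ⁻¹' {y} ∩ s) := ⟨fun x => hy ⟨x, x.2.2, x.2.1⟩⟩
      simp
  unfold AreaProp
  rw [key]
  refine ⟨(hg.indicator him).aemeasurable, ?_⟩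
  rw [lintegral_indicator him, lintegral_image_eq_lintegral_abs_det_fderiv_mul volume hs hD hv]
  refine setLIntegral_congr_fun hs fun x hx => ?_
  simp only [hgF' x hx, mul_comm]

theorem areaProp_iUnion {n : ℕ} {v : Euc n → Euc n} {D : Euc n → (Euc n →L[ℝ] Euc n)}
    {F : Euc n → ℝ≥0∞} {ι : Type*} [Countable ι] {s : ι → Set (Euc n)}
    (hs : ∀ i, MeasurableSet (s i))
    (hd : Pairwise (Function.onFun Disjoint s)) (h : ∀ i, AreaProp v D F (s i)) :
    AreaProp v D F (⋃ i, s i) := by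
  have key : (fun y => ∑' x : ↥(v ⁻¹' {y} ∩ ⋃ i, s i), F ↑x) =
      fun y => ∑' i, ∑' x : ↥(v ⁻¹' {y} ∩ s i), F ↑x := by
    funext y
    rw [inter_iUnion]
    apply ENNReal.tsum_biUnion (f := F)
    intro i _ j _ hij
    exact (hd hij).mono inter_subset_right inter_subset_right
  unfold AreaProp
  rw [key]
  refine ⟨AEMeasurable.tsum fun i => (h i).1, ?_⟩
  rw [lintegral_tsum fun i => (h i).1, lintegral_iUnion hs hd]
  exact tsum_congr fun i => (h i).2

theorem areaProp_union {n : ℕ} {v : Euc n → Euc n} {D : Euc n → (Euc n →L[ℝ] Euc n)}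
    {F : Euc n → ℝ≥0∞} {s t : Set (Euc n)}
    (hs : MeasurableSet s) (ht : MeasurableSet t)
    (hd : Disjoint s t) (h1 : AreaProp v D F s) (h2 : AreaProp v D F t) :
    AreaProp v D F (s ∪ t) := by
  rw [union_eq_iUnion]
  apply areaProp_iUnion
  · rintro (_ | _) <;> simpa
  · rw [pairwise_disjoint_on_bool]; exact hd
  · rintro (_ | _) <;> simpa

theorem lipschitz_null {n : ℕ} {V : Euc n → Euc n} {C : ℝ≥0} (hV : LipschitzWith C V)
    {s : Set (Euc n)} (hs : volume s = 0) : volume (V '' s) = 0 := by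
  have hac : (volume : Measure (Euc n)) ≪ μH[Module.finrank ℝ (Euc n)] :=
    Measure.absolutelyContinuous_isAddHaarMeasure _ _
  have hac' : μH[Module.finrank ℝ (Euc n)] ≪ (volume : Measure (Euc n)) :=
    Measure.absolutelyContinuous_isAddHaarMeasure _ _
  apply hac
  refine le_antisymm ((hV.hausdorffMeasure_image_le (by positivity) s).trans ?_) zero_le
  rw [hac' hs, mul_zero]

theorem areaProp_lipschitz {n : ℕ} {v V : Euc n → Euc n} {D : Euc n → (Euc n →L[ℝ] Euc n)}
    {F : Euc n → ℝ≥0∞} (hF : Measurable F) {C : ℝ≥0} (hV : LipschitzWith C V)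
    {A : Set (Euc n)} (hA : MeasurableSet A) (hvV : EqOn v V A)
    (hD : ∀ x ∈ A, D x = fderiv ℝ V x) : AreaProp v D F A := by
  have hdiff : MeasurableSet {x | DifferentiableAt ℝ V x} :=
    measurableSet_of_differentiableAt ℝ V
  have hdet : Measurable fun x => (fderiv ℝ V x).det :=
    ContinuousLinearMap.continuous_det.measurable.comp (measurable_fderiv ℝ V)
  set N := A \ {x | DifferentiableAt ℝ V x} with hN
  set Z := A ∩ {x | DifferentiableAt ℝ V x} ∩ {x | (fderiv ℝ V x).det = 0} with hZ
  set R := A ∩ {x | DifferentiableAt ℝ V x} ∩ {x | (fderiv ℝ V x).det ≠ 0} with hR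
  have mN : MeasurableSet N := hA.diff hdiff
  have mZ : MeasurableSet Z := (hA.inter hdiff).inter (hdet (measurableSet_singleton 0))
  have mR : MeasurableSet R := (hA.inter hdiff).inter (hdet (measurableSet_singleton 0).compl)
  have hAeq : A = N ∪ (Z ∪ R) := by
    ext x
    simp only [hN, hZ, hR, mem_union, Set.mem_sdiff, mem_inter_iff, mem_ofPred_eq]
    tauto
  have hder : ∀ x ∈ A, DifferentiableAt ℝ V x → HasFDerivWithinAt v (D x) A x := by
    intro x hx hxd
    rw [hD x hx]
    exact hxd.hasFDerivAt.hasFDerivWithinAt.congr hvV (hvV hx)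
  have ZA : Z ⊆ A := fun x hx => hx.1.1
  have RA : R ⊆ A := fun x hx => hx.1.1
  have NA : N ⊆ A := fun x hx => hx.1
  have pN : AreaProp v D F N := by
    have h0 : volume N = 0 := by
      have := hV.ae_differentiableAt (μ := (volume : Measure (Euc n)))
      refine measure_mono_null (fun x hx => ?_) this
      exact hx.2
    refine areaProp_null ?_ ?_
    · rw [(hvV.mono NA).image_eq]; exact lipschitz_null hV h0
    · exact setLIntegral_measure_zero _ _ h0
  have pZ : AreaProp v D F Z := by
    have hdz : ∀ x ∈ Z, (D x).det = 0 := fun x hx => by rw [hD x (ZA hx)]; exact hx.2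
    refine areaProp_null ?_ ?_
    · exact addHaar_image_eq_zero_of_det_fderivWithin_eq_zero volume
        (fun x hx => (hder x (ZA hx) hx.1.2).mono ZA) hdz
    · rw [setLIntegral_congr_fun (g := fun _ => 0) mZ]
      · simp
      · intro x hx; simp [hdz x hx]
  have pR : AreaProp v D F R := by
    have hRd : ∀ x ∈ R, HasFDerivWithinAt v (D x) R x :=
      fun x hx => (hder x (RA hx) hx.1.2).mono RA
    have hdr : ∀ x ∈ R, (D x).det ≠ 0 := fun x hx => by rw [hD x (RA hx)]; exact hx.2
    classical
    have hr : ∀ A : Euc n →L[ℝ] Euc n, ∃ r : ℝ≥0, r ≠ 0 ∧ ∀ h : A.det ≠ 0,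
        Subsingleton (Euc n) ∨
          r < ‖((A.toContinuousLinearEquivOfDetNeZero h).symm : Euc n →L[ℝ] Euc n)‖₊⁻¹ := by
      intro A
      by_cases h : A.det ≠ 0
      · rcases (A.toContinuousLinearEquivOfDetNeZero h).subsingleton_or_nnnorm_symm_pos with h1 | h1
        · exact ⟨1, one_ne_zero, fun _ => Or.inl h1⟩
        · obtain ⟨r, hr0, hr⟩ := exists_between (inv_pos.2 h1)
          exact ⟨r, hr0.ne', fun _ => Or.inr hr⟩
      · exact ⟨1, one_ne_zero, fun h' => absurd h' h⟩
    choose r hr0 hr using hr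
    obtain ⟨t, L, td, tm, tc, ta, tL⟩ :=
      exists_partition_approximatesLinearOn_of_hasFDerivWithinAt v R D hRd r hr0
    have hRt : R = ⋃ i, R ∩ t i := by
      rw [← inter_iUnion, inter_eq_left.2 tc]
    rw [hRt]
    refine areaProp_iUnion (fun i => mR.inter (tm i)) ?_ ?_
    · intro i j hij
      exact (td hij).mono inter_subset_right inter_subset_right
    · intro i
      refine areaProp_inj hF (mR.inter (tm i))
        (fun x hx => (hRd x hx.1).mono inter_subset_left) ?_
      rcases R.eq_empty_or_nonempty with h | h
      · rw [h, empty_inter]; exact injOn_empty _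
      · obtain ⟨y, hy, hLy⟩ := tL h i
        have hd : (L i).det ≠ 0 := by rw [hLy]; exact hdr y hy
        have := ta i
        exact ApproximatesLinearOn.injOn (f' := (L i).toContinuousLinearEquivOfDetNeZero hd)
          (by simpa using this) (hr (L i) hd)
  have dZR : Disjoint Z R := by
    rw [Set.disjoint_left]; intro x h1 h2; exact h2.2 h1.2
  have dN : Disjoint N (Z ∪ R) := by
    rw [Set.disjoint_left]; rintro x h1 (h2 | h2) <;> exact h1.2 h2.1.2
  rw [hAeq]
  exact areaProp_union mN (mZ.union mR) dN pN (areaProp_union mZ mR dZR pZ pR)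

theorem densityPt_ae {n : ℕ} {A : Set (Euc n)} (hA : MeasurableSet A) :
    ∀ᵐ x ∂(volume : Measure (Euc n)), x ∈ A → DensityPt A x := by
  filter_upwards [Besicovitch.ae_tendsto_measure_inter_div_of_measurableSet volume hA] with x hx hxA
  rw [indicator_of_mem hxA] at hx
  refine hx.congr' ?_
  filter_upwards [self_mem_nhdsWithin] with r hr
  have hr' : (0 : ℝ) < r := hr
  rw [Measure.addHaar_closedBall volume x hr'.le, ← Measure.addHaar_ball_of_pos volume x hr']
  congr 1
  have : volume (sphere x r) = 0 := Measure.addHaar_sphere_of_ne_zero volume x hr'.ne'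
  apply measure_congr
  apply ae_eq_set_inter (ae_eq_refl _)
  rw [← ball_union_sphere]
  exact union_ae_eq_left_of_ae_eq_empty (ae_eq_empty.2 this)

theorem densityPt_mono {n : ℕ} {A B : Set (Euc n)} {x : Euc n} (hA : DensityPt A x) {δ : ℝ}
    (hδ : 0 < δ) (h : A ∩ ball x δ ⊆ B) : DensityPt B x := by
  refine tendsto_of_tendsto_of_tendsto_of_le_of_le' hA tendsto_const_nhds ?_ ?_
  · filter_upwards [Ioo_mem_nhdsGT hδ] with r hr
    refine ENNReal.div_le_div_right (measure_mono ?_) _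
    intro y hy
    exact ⟨h ⟨hy.1, ball_subset_ball hr.2.le hy.2⟩, hy.2⟩
  · filter_upwards with r
    refine ENNReal.div_le_of_le_mul ?_
    rw [one_mul]
    exact measure_mono inter_subset_right

theorem area_abstract {n : ℕ} (hn : 0 < n) {Ω : Set (Euc n)} (hΩ : IsOpen Ω) {v : Euc n → Euc n}
    {E : ℕ → Set (Euc n)} (hE : ∀ i, MeasurableSet (E i)) (hEΩ : ∀ i, E i ⊆ Ω)
    (hL : ∀ i, ∃ C, LipschitzOnWith C v (E i)) {S : Set (Euc n)} (hS : S = Ω \ ⋃ i, E i) :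
    ∃ D : Euc n → (Euc n →L[ℝ] Euc n),
        (∀ᵐ x ∂(volume.restrict (Ω \ S)), HasApproxDerivAt (Ω \ S) v (D x) x) ∧
        ∀ f : Euc n → ℝ, Measurable (Ω.domRestrict f) →
          ∫⁻ x in Ω, ENNReal.ofReal (f x) * ENNReal.ofReal |(D x).det| =
            ∫⁻ y, ∑' x : ↥(v ⁻¹' {y} ∩ (Ω \ S)), ENNReal.ofReal (f ↑x) := by
  classical
  set A := disjointed E with hAdef
  have hA : ∀ i, MeasurableSet (A i) := MeasurableSet.disjointed hE
  have hd : Pairwise (Function.onFun Disjoint A) := disjoint_disjointed _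
  have hU : ⋃ i, A i = ⋃ i, E i := iUnion_disjointed
  have hAE : ∀ i, A i ⊆ E i := fun i => disjointed_subset _ _
  have hG : Ω \ S = ⋃ i, A i := by
    rw [hS, hU, sdiff_sdiff_right_self]
    exact inter_eq_right.2 (iUnion_subset hEΩ)
  have hext : ∀ i, ∃ (C : ℝ≥0) (V : Euc n → Euc n), LipschitzWith C V ∧ EqOn v V (A i) := by
    intro i
    obtain ⟨C, hC⟩ := hL i
    obtain ⟨V, hV, hvV⟩ := (hC.mono (hAE i)).extend_finite_dimension
    exact ⟨_, V, hV, hvV⟩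
  choose C V hV hvV using hext
  let D : Euc n → (Euc n →L[ℝ] Euc n) := fun x =>
    if h : ∃ i, x ∈ A i then fderiv ℝ (V h.choose) x else 0
  have hD : ∀ i, ∀ x ∈ A i, D x = fderiv ℝ (V i) x := by
    intro i x hx
    have h : ∃ i, x ∈ A i := ⟨i, hx⟩
    have : h.choose = i := by
      by_contra hne
      exact Set.disjoint_left.1 (hd hne) h.choose_spec hx
    simp only [D, dif_pos h, this]
  have hD0 : ∀ x, (x ∉ ⋃ i, A i) → D x = 0 := by
    intro x hx
    have h : ¬ ∃ i, x ∈ A i := by simpa using hx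
    simp only [D, dif_neg h]
  have mG : MeasurableSet (⋃ i, A i) := MeasurableSet.iUnion hA
  refine ⟨D, ?_, ?_⟩
  · rw [hG]
    rw [ae_restrict_iff' mG]
    have h1 : ∀ᵐ x ∂(volume : Measure (Euc n)), ∀ i, x ∈ A i → DensityPt (A i) x :=
      ae_all_iff.2 fun i => densityPt_ae (hA i)
    have h2 : ∀ᵐ x ∂(volume : Measure (Euc n)), ∀ i, DifferentiableAt ℝ (V i) x :=
      ae_all_iff.2 fun i => (hV i).ae_differentiableAt
    filter_upwards [h1, h2] with x hx1 hx2 hxG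
    obtain ⟨i, hi⟩ := mem_iUnion.1 hxG
    have hdp := hx1 i hi
    refine ⟨densityPt_mono hdp one_pos (inter_subset_left.trans (subset_iUnion A i)), ?_⟩
    intro ε hε
    have := (hx2 i).hasFDerivAt.isLittleO.bound hε
    obtain ⟨δ, hδ, hball⟩ := Metric.eventually_nhds_iff_ball.1 this
    refine densityPt_mono hdp hδ ?_
    rintro y ⟨hyA, hy⟩
    refine ⟨mem_iUnion.2 ⟨i, hyA⟩, ?_⟩
    rw [hvV i hyA, hvV i hi, hD i x hi]
    exact hball y hy
  · intro f hf
    set F : Euc n → ℝ≥0∞ := Ω.indicator fun x => ENNReal.ofReal (f x) with hFdef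
    have hFm : Measurable F := by
      refine measurable_of_restrict_of_restrict_compl hΩ.measurableSet ?_ ?_
      · have : Ω.domRestrict F = fun x => ENNReal.ofReal (Ω.domRestrict f x) := by
          funext x; simp [F]
        rw [this]; exact hf.ennreal_ofReal
      · have : Ωᶜ.domRestrict F = fun x => 0 := by
          funext x; simp only [F, domRestrict_apply]; exact indicator_of_notMem x.2 _
        rw [this]; exact measurable_const
    have key : AreaProp v D F (⋃ i, A i) :=
      areaProp_iUnion hA hd fun i => areaProp_lipschitz hFm (hV i) (hA i) (hvV i) (hD i)
    have hGΩ : (⋃ i, A i) ⊆ Ω := by rw [hU]; exact iUnion_subset hEΩ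
    have e1 : ∫⁻ x in Ω, ENNReal.ofReal (f x) * ENNReal.ofReal |(D x).det| =
        ∫⁻ x in ⋃ i, A i, F x * ENNReal.ofReal |(D x).det| := by
      rw [← lintegral_indicator hΩ.measurableSet, ← lintegral_indicator mG]
      congr 1
      funext x
      by_cases hx : x ∈ ⋃ i, A i
      · rw [indicator_of_mem hx, indicator_of_mem (hGΩ hx), hFdef, indicator_of_mem (hGΩ hx)]
      · rw [indicator_of_notMem hx]
        have : (D x).det = 0 := by
          rw [hD0 x hx]
          show LinearMap.det ((0 : Euc n →L[ℝ] Euc n) : Euc n →ₗ[ℝ] Euc n) = 0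
          rw [ContinuousLinearMap.toLinearMap_zero, LinearMap.det_zero]
          simp [hn.ne']
        rw [indicator_apply]; split_ifs <;> simp [this]
    rw [e1, ← key.2, hG]
    congr 1
    funext y
    refine tsum_congr fun x => ?_
    rw [hFdef, indicator_of_mem (hGΩ x.2.2)]

/-- Unnormalised Riesz potential. -/
noncomputable def rpot {n : ℕ} (a : ℝ) (h : Euc n → ℝ≥0∞) (x : Euc n) : ℝ≥0∞ :=
  ∫⁻ y, h y * ENNReal.ofReal (‖x - y‖ ^ (a - (n : ℝ)))

theorem measurable_rkernel {n : ℕ} (b : ℝ) (x : Euc n) :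
    Measurable fun y : Euc n => ENNReal.ofReal (‖x - y‖ ^ b) := by
  fun_prop

theorem rieszCap_zero {n : ℕ} {a p : ℝ} (hp : 1 ≤ p) {h : ℕ → Euc n → ℝ≥0∞}
    (hm : ∀ j, Measurable (h j)) (hfin : ∀ j, ∫⁻ y, h j y ^ p ≠ ∞) {S : Set (Euc n)}
    (hS : ∀ x ∈ S, ∃ j, rpot a (h j) x = ∞) : rieszCap a p S = 0 := by
  have hp0 : 0 < p := by linarith
  obtain ⟨c, hc0, hc⟩ := ENNReal.exists_pos_tsum_mul_lt_of_countable (ε := 1) one_ne_zero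
    (fun j => ∫⁻ y, h j y ^ p) hfin
  set Q : Euc n → ℝ≥0∞ := fun y => ∑' j, h j y ^ p * c j with hQ
  have hQm : Measurable Q := by
    apply Measurable.tsum
    intro j; exact ((hm j).pow_const p).mul_const _
  have hQi : ∫⁻ y, Q y < 1 := by
    rw [lintegral_tsum fun j => (((hm j).pow_const p).mul_const _).aemeasurable]
    refine lt_of_eq_of_lt (tsum_congr fun j => ?_) hc
    rw [lintegral_mul_const _ ((hm j).pow_const p)]
  set H : Euc n → ℝ≥0∞ := fun y => Q y ^ (1 / p) with hH
  have hHm : Measurable H := hQm.pow_const _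
  have hHp : ∀ y, H y ^ p = Q y := by
    intro y
    simp only [hH]
    rw [← ENNReal.rpow_mul, one_div, inv_mul_cancel₀ hp0.ne', ENNReal.rpow_one]
  have hHf : ∀ᵐ y ∂(volume : Measure (Euc n)), H y < ∞ := by
    filter_upwards [ae_lt_top hQm (hQi.trans ENNReal.one_lt_top).ne] with y hy
    exact ENNReal.rpow_lt_top_of_nonneg (by positivity) hy.ne
  have hHj : ∀ j y, h j y * (c j : ℝ≥0∞) ^ (1 / p) ≤ H y := by
    intro j y
    have : h j y * (c j : ℝ≥0∞) ^ (1 / p) = (h j y ^ p * c j) ^ (1 / p) := by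
      rw [ENNReal.mul_rpow_of_nonneg _ _ (by positivity), ← ENNReal.rpow_mul, mul_one_div_cancel hp0.ne',
        ENNReal.rpow_one]
    rw [this]
    exact ENNReal.rpow_le_rpow (ENNReal.le_tsum (f := fun j => h j y ^ p * (c j : ℝ≥0∞)) j) (by positivity)
  have hinf : ∀ x ∈ S, rpot a H x = ∞ := by
    intro x hx
    obtain ⟨j, hj⟩ := hS x hx
    have hcj : (c j : ℝ≥0∞) ^ (1 / p) ≠ 0 := by
      have := hc0 j
      simp only [ne_eq, ENNReal.rpow_eq_zero_iff, not_or, not_and]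
      constructor
      · intro h; simp at h; exact absurd h (hc0 j).ne'
      · intro h; simp at h
    rw [eq_top_iff]
    calc ∞ = rpot a (h j) x * (c j : ℝ≥0∞) ^ (1 / p) := by
            rw [hj, ENNReal.top_mul hcj]
      _ = ∫⁻ y, h j y * ENNReal.ofReal (‖x - y‖ ^ (a - (n : ℝ))) * (c j : ℝ≥0∞) ^ (1 / p) := by
            exact (lintegral_mul_const _ ((hm j).mul (measurable_rkernel _ x))).symm
      _ ≤ rpot a H x := by
            refine lintegral_mono fun y => ?_
            calc _ = h j y * (c j : ℝ≥0∞) ^ (1 / p) * ENNReal.ofReal (‖x - y‖ ^ (a - (n : ℝ))) := by ring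
              _ ≤ _ := by gcongr; exact hHj j y
  have main : ∀ t : ℝ, 0 < t → rieszCap a p S ≤ ENNReal.ofReal (t ^ p) := by
    intro t ht
    have hofr : ∀ᵐ y ∂(volume : Measure (Euc n)), ENNReal.ofReal (t * (H y).toReal) = ENNReal.ofReal t * H y := by
      filter_upwards [hHf] with y hy
      rw [ENNReal.ofReal_mul ht.le, ENNReal.ofReal_toReal hy.ne]
    have hint : ∫⁻ y, ENNReal.ofReal (t * (H y).toReal) ^ p ≤ ENNReal.ofReal (t ^ p) := by
      calc _ = ∫⁻ y, ENNReal.ofReal (t ^ p) * Q y := by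
            apply lintegral_congr_ae
            filter_upwards [hofr] with y hy
            rw [hy, ENNReal.mul_rpow_of_nonneg _ _ hp0.le, hHp, ENNReal.ofReal_rpow_of_pos ht]
        _ = ENNReal.ofReal (t ^ p) * ∫⁻ y, Q y := lintegral_const_mul _ hQm
        _ ≤ ENNReal.ofReal (t ^ p) * 1 := by gcongr
        _ = _ := mul_one _
    refine (iInf₂_le (fun y => t * (H y).toReal) ⟨?_, ?_, ?_⟩).trans hint
    · refine ⟨(hHm.ennreal_toReal.const_mul t).aestronglyMeasurable, ?_⟩
      rw [eLpNorm_lt_top_iff_lintegral_rpow_enorm_lt_top (by simpa using hp0) (by simp)]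
      rw [ENNReal.toReal_ofReal hp0.le]
      refine lt_of_le_of_lt (le_trans (le_of_eq ?_) hint) ENNReal.ofReal_lt_top
      congr 1
      funext y
      rw [Real.enorm_of_nonneg (by positivity)]
    · intro y; positivity
    · intro x hx
      have : rieszPot a (fun y => t * (H y).toReal) x = ∞ := by
        unfold rieszPot
        have e : ∫⁻ y, ENNReal.ofReal (t * (H y).toReal) * ENNReal.ofReal (‖x - y‖ ^ (a - (n : ℝ))) = ∞ := by
          calc _ = ∫⁻ y, ENNReal.ofReal t * (H y * ENNReal.ofReal (‖x - y‖ ^ (a - (n : ℝ)))) := by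
                apply lintegral_congr_ae
                filter_upwards [hofr] with y hy
                rw [hy, mul_assoc]
            _ = ENNReal.ofReal t * rpot a H x := lintegral_const_mul _ (hHm.mul (measurable_rkernel _ x))
            _ = ∞ := by
                rw [hinf x hx]; exact ENNReal.mul_top (by simpa using ht)
        rw [e]
        exact ENNReal.mul_top (by simp)
      rw [this]; exact le_top
  refine le_antisymm ?_ zero_le
  have lim : Tendsto (fun t : ℝ => ENNReal.ofReal (t ^ p)) (𝓝[>] 0) (𝓝 0) := by
    have h1 : Tendsto (fun t : ℝ => t ^ p) (𝓝[>] 0) (𝓝 0) := by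
      have := (Real.continuousAt_rpow_const 0 p (Or.inr hp0.le)).tendsto
      rw [Real.zero_rpow hp0.ne'] at this
      exact this.mono_left nhdsWithin_le_nhds
    simpa using ENNReal.tendsto_ofReal h1
  exact ge_of_tendsto lim (by filter_upwards [self_mem_nhdsWithin] with t ht using main t ht)

theorem lintegral_affine {n : ℕ} {F : Euc n → ℝ≥0∞} (hF : Measurable F) (x : Euc n) {t : ℝ}
    (ht : 0 < t) : ∫⁻ z, F (x + t • z) = ENNReal.ofReal ((t ^ n)⁻¹) * ∫⁻ y, F y := by
  have h1 : ∫⁻ y, F (x + y) = ∫⁻ y, F y := lintegral_add_left_eq_self F x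
  rw [← h1]
  have h2 := Measure.map_addHaar_smul (volume : Measure (Euc n)) ht.ne'
  have hG : Measurable fun y => F (x + y) := hF.comp (measurable_const_add x)
  have h3 : ∫⁻ y, F (x + y) ∂(Measure.map (fun z : Euc n => t • z) volume) = ∫⁻ z, F (x + t • z) :=
    lintegral_map hG (measurable_const_smul t)
  rw [← h3, h2, lintegral_smul_measure]
  simp [abs_of_pos (pow_pos ht n)]

theorem rkernel_c0 {n : ℕ} {b : ℝ} (hn : 0 < n) (hb : -(n : ℝ) < b) :
    ∫⁻ y in ball (0 : Euc n) 1, ENNReal.ofReal (‖y‖ ^ b) < ∞ := by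
  have : Nonempty (Fin n) := ⟨⟨0, hn⟩⟩
  have h1 : IntegrableOn (fun y : Euc n => (fun s : ℝ => s ^ b) ‖y‖) (ball (0 : Euc n) 1) volume := by
    refine (integrableOn_fun_norm_addHaar volume (f := fun s : ℝ => s ^ b)).2 ?_
    rw [finrank_euclideanSpace_fin]
    have : EqOn (fun y : ℝ => y ^ (n - 1) • y ^ b) (fun y => y ^ (((n - 1 : ℕ) : ℝ) + b)) (Ioo 0 1) := by
      intro y hy
      simp only [smul_eq_mul]
      rw [Real.rpow_add hy.1, Real.rpow_natCast]
    rw [integrableOn_congr_fun this measurableSet_Ioo, intervalIntegral.integrableOn_Ioo_rpow_iff one_pos]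
    rw [Nat.cast_sub hn]; push_cast; linarith
  have := h1.2
  rw [hasFiniteIntegral_iff_ofReal] at this
  · exact this
  · filter_upwards with y; positivity

theorem rkernel_ball {n : ℕ} {b : ℝ} {R : ℝ} (hR : 0 < R) :
    ∫⁻ y in ball (0 : Euc n) R, ENNReal.ofReal (‖y‖ ^ b) =
      ENNReal.ofReal (R ^ n) * ENNReal.ofReal (R ^ b) * ∫⁻ y in ball (0 : Euc n) 1, ENNReal.ofReal (‖y‖ ^ b) := by
  have hm : Measurable fun y : Euc n => ENNReal.ofReal (‖y‖ ^ b) := by fun_prop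
  set F : Euc n → ℝ≥0∞ := (ball (0 : Euc n) R).indicator fun y => ENNReal.ofReal (‖y‖ ^ b) with hF
  have hFm : Measurable F := hm.indicator measurableSet_ball
  have h := lintegral_affine hFm 0 hR
  have e : ∀ z : Euc n, F (0 + R • z) =
      ENNReal.ofReal (R ^ b) * (ball (0 : Euc n) 1).indicator (fun y => ENNReal.ofReal (‖y‖ ^ b)) z := by
    intro z
    have hz : (0 + R • z ∈ ball (0 : Euc n) R) ↔ z ∈ ball (0 : Euc n) 1 := by
      simp [norm_smul, abs_of_pos hR]
      constructor
      · intro h; nlinarith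
      · intro h; nlinarith
    by_cases h : z ∈ ball (0 : Euc n) 1
    · rw [hF, indicator_of_mem (hz.2 h), indicator_of_mem h, zero_add, norm_smul, Real.norm_of_nonneg hR.le,
        Real.mul_rpow hR.le (norm_nonneg z), ENNReal.ofReal_mul (by positivity)]
    · rw [hF, indicator_of_notMem (fun h' => h (hz.1 h')), indicator_of_notMem h, mul_zero]
  simp_rw [e] at h
  rw [lintegral_const_mul _ (hm.indicator measurableSet_ball), lintegral_indicator measurableSet_ball,
    hF, lintegral_indicator measurableSet_ball] at h
  rw [mul_assoc, h, ← mul_assoc, ← ENNReal.ofReal_mul (by positivity), mul_inv_cancel₀ (by positivity)]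
  simp

theorem rkernel_avg {n : ℕ} {b : ℝ} (hn : 0 < n) (hb : -(n : ℝ) < b) (hb0 : b < 0) :
    ∃ C : ℝ≥0∞, C ≠ ∞ ∧ ∀ (x w : Euc n) (r : ℝ), 0 < r → w ≠ x →
      ∫⁻ y in ball x r, ENNReal.ofReal (‖y - w‖ ^ b) ≤
        C * volume (ball x r) * ENNReal.ofReal (‖x - w‖ ^ b) := by
  have : Nonempty (Fin n) := ⟨⟨0, hn⟩⟩
  set c0 := ∫⁻ y in ball (0 : Euc n) 1, ENNReal.ofReal (‖y‖ ^ b) with hc0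
  have hc0f : c0 < ∞ := rkernel_c0 hn hb
  set ω := volume (ball (0 : Euc n) 1) with hω
  have hω0 : ω ≠ 0 := (measure_ball_pos _ _ one_pos).ne'
  have hωt : ω ≠ ∞ := measure_ball_lt_top.ne
  have hm : Measurable fun y : Euc n => ENNReal.ofReal (‖y‖ ^ b) := by fun_prop
  set C1 : ℝ≥0∞ := ENNReal.ofReal ((1/2 : ℝ) ^ b)
  set C2 : ℝ≥0∞ := ENNReal.ofReal ((3 : ℝ) ^ n) * ENNReal.ofReal ((3 : ℝ) ^ b) * c0 * ω⁻¹
  have hC2 : C2 ≠ ∞ := by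
    refine ENNReal.mul_ne_top (ENNReal.mul_ne_top (ENNReal.mul_ne_top ?_ ?_) hc0f.ne) ?_
    · exact ENNReal.ofReal_ne_top
    · exact ENNReal.ofReal_ne_top
    · simpa using hω0
  refine ⟨C1 * (1 + C2), ENNReal.mul_ne_top ENNReal.ofReal_ne_top (by simp [hC2]), ?_⟩
  intro x w r hr hwx
  set d := ‖x - w‖ with hd
  have hd0 : 0 < d := norm_pos_iff.2 (sub_ne_zero.2 hwx.symm)
  have hhalf : ENNReal.ofReal ((d/2) ^ b) = C1 * ENNReal.ofReal (d ^ b) := by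
    rw [← ENNReal.ofReal_mul (by positivity), ← Real.mul_rpow (by norm_num) hd0.le]
    congr 2; ring
  rcases le_or_gt (2 * r) d with h | h
  · calc ∫⁻ y in ball x r, ENNReal.ofReal (‖y - w‖ ^ b)
        ≤ ∫⁻ y in ball x r, ENNReal.ofReal ((d/2) ^ b) := by
          refine setLIntegral_mono' measurableSet_ball fun y hy => ?_
          apply ENNReal.ofReal_le_ofReal
          apply Real.rpow_le_rpow_of_nonpos (by positivity) _ hb0.le
          have h1 : ‖x - w‖ ≤ ‖x - y‖ + ‖y - w‖ := norm_sub_le_norm_sub_add_norm_sub x y w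
          have h2 : ‖x - y‖ < r := by rw [← dist_eq_norm, dist_comm]; exact hy
          linarith
      _ = C1 * ENNReal.ofReal (d ^ b) * volume (ball x r) := by
          rw [setLIntegral_const, hhalf]
      _ ≤ C1 * ENNReal.ofReal (d ^ b) * volume (ball x r) * (1 + C2) := by
          exact le_mul_of_one_le_right zero_le (by simp)
      _ = _ := by ring
  · have hvol : volume (ball x r) = ENNReal.ofReal (r ^ n) * ω := by
      rw [Measure.addHaar_ball_of_pos volume x hr, finrank_euclideanSpace_fin]
    have hsub : ball x r ⊆ ball w (3 * r) := by
      apply ball_subset_ball'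
      rw [dist_eq_norm]; linarith
    have htr : ∫⁻ y in ball w (3 * r), ENNReal.ofReal (‖y - w‖ ^ b) =
        ∫⁻ y in ball (0 : Euc n) (3 * r), ENNReal.ofReal (‖y‖ ^ b) := by
      rw [← lintegral_indicator measurableSet_ball, ← lintegral_indicator measurableSet_ball,
        ← lintegral_sub_right_eq_self ((ball (0 : Euc n) (3 * r)).indicator
          fun y => ENNReal.ofReal (‖y‖ ^ b)) w]
      refine lintegral_congr fun y => ?_
      classical
      simp only [indicator_apply, mem_ball, dist_eq_norm, sub_zero]
    have hrb : ENNReal.ofReal (r ^ b) ≤ C1 * ENNReal.ofReal (d ^ b) := by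
      rw [← hhalf]
      apply ENNReal.ofReal_le_ofReal
      apply Real.rpow_le_rpow_of_nonpos (by positivity) (by linarith) hb0.le
    calc ∫⁻ y in ball x r, ENNReal.ofReal (‖y - w‖ ^ b)
        ≤ ∫⁻ y in ball w (3 * r), ENNReal.ofReal (‖y - w‖ ^ b) := lintegral_mono_set hsub
      _ = ENNReal.ofReal ((3 * r) ^ n) * ENNReal.ofReal ((3 * r) ^ b) * c0 := by
          rw [htr, rkernel_ball (by positivity)]
      _ = C2 * (ENNReal.ofReal (r ^ n) * ω) * ENNReal.ofReal (r ^ b) := by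
          rw [mul_pow, Real.mul_rpow (by norm_num) hr.le, ENNReal.ofReal_mul (by positivity),
            ENNReal.ofReal_mul (by positivity)]
          simp only [C2]
          calc _ = ENNReal.ofReal ((3 : ℝ) ^ n) * ENNReal.ofReal ((3 : ℝ) ^ b) * c0 * 1 * ENNReal.ofReal (r ^ n) *
                ENNReal.ofReal (r ^ b) := by ring
            _ = ENNReal.ofReal ((3 : ℝ) ^ n) * ENNReal.ofReal ((3 : ℝ) ^ b) * c0 * (ω⁻¹ * ω) * ENNReal.ofReal (r ^ n) *
                ENNReal.ofReal (r ^ b) := by rw [ENNReal.inv_mul_cancel hω0 hωt]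
            _ = _ := by ring
      _ ≤ (1 + C2) * volume (ball x r) * (C1 * ENNReal.ofReal (d ^ b)) := by
          rw [hvol]
          gcongr
          exact le_add_self
      _ = _ := by ring

theorem measurable_rpot {n : ℕ} (a : ℝ) {h : Euc n → ℝ≥0∞} (hh : Measurable h) :
    Measurable (rpot a h) := by
  unfold rpot
  apply Measurable.lintegral_prod_right'
    (f := fun q : Euc n × Euc n => h q.2 * ENNReal.ofReal (‖q.1 - q.2‖ ^ (a - (n : ℝ))))
  fun_prop

theorem rpot_avg {n : ℕ} {a : ℝ} (hn : 0 < n) (ha : 0 < a) (han : a < n) :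
    ∃ C : ℝ≥0∞, C ≠ ∞ ∧ ∀ (h : Euc n → ℝ≥0∞), Measurable h → ∀ (x : Euc n) (r : ℝ), 0 < r →
      ∫⁻ y in ball x r, rpot a h y ≤ C * volume (ball x r) * rpot a h x := by
  have : Nonempty (Fin n) := ⟨⟨0, hn⟩⟩
  obtain ⟨C, hC, H⟩ := rkernel_avg (n := n) (b := a - n) hn (by linarith) (by linarith)
  refine ⟨C, hC, fun h hh x r hr => ?_⟩
  have hm : Measurable (fun q : Euc n × Euc n => h q.2 * ENNReal.ofReal (‖q.1 - q.2‖ ^ (a - (n : ℝ)))) := by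
    fun_prop
  unfold rpot
  rw [lintegral_lintegral_swap hm.aemeasurable, ← lintegral_const_mul _ (by fun_prop)]
  apply lintegral_mono_ae
  have : ∀ᵐ w ∂(volume : Measure (Euc n)), w ≠ x := by
    simp [ae_iff]
  filter_upwards [this] with w hw
  rw [lintegral_const_mul _ (by fun_prop)]
  calc _ ≤ h w * (C * volume (ball x r) * ENNReal.ofReal (‖x - w‖ ^ (a - (n : ℝ)))) := by
        gcongr; exact H x w r hr hw
    _ = _ := by ring

theorem good_point {n : ℕ} {G : Euc n → ℝ≥0∞} (hGm : Measurable G) {C K : ℝ≥0∞}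
    (hC : C ≠ ∞) (hK : K ≠ ∞)
    (A1 : ∀ x r, 0 < r → ∫⁻ y in ball x r, G y ≤ C * volume (ball x r) * G x)
    {u : Euc n → Euc n} {B : Set (Euc n)} (hu : IntegrableOn u B) {N : Set (Euc n)}
    (hN : volume N = 0)
    (hub : ∀ x ∈ B, ∀ y ∈ B, x ∉ N → y ∉ N → ‖u x - u y‖ₑ ≤ K * ‖x - y‖ₑ * (G x + G y))
    (m : ℕ) {x : Euc n} (hx : G x ≤ m) {δ : ℝ} (hδ : 0 < δ) (hB : ball x δ ⊆ B) :
    ∃ z ∈ ball x δ, z ∉ N ∧ G z ≤ C * m ∧ ∀ ε, 0 < ε → ε ≤ δ →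
      ‖(⨍ y in ball x ε, u y) - u z‖ ≤ 2 * (K * (2 * (C * m))).toReal * δ := by
  have hvol0 : ∀ r : ℝ, 0 < r → volume (ball x r) ≠ 0 := fun r hr => (measure_ball_pos _ _ hr).ne'
  have hvolt : ∀ r : ℝ, volume (ball x r) ≠ ∞ := fun r => measure_ball_lt_top.ne
  have hA : ∀ r, 0 < r → ⨍⁻ y in ball x r, G y ∂volume ≤ C * m := by
    intro r hr
    rw [setLAverage_eq]
    apply ENNReal.div_le_of_le_mul
    calc _ ≤ C * volume (ball x r) * G x := A1 x r hr
      _ ≤ C * volume (ball x r) * m := by gcongr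
      _ = _ := by ring
  have hμ : volume.restrict (ball x δ) ≠ 0 := by
    rw [Ne, Measure.restrict_eq_zero]; exact hvol0 δ hδ
  have hN' : (volume.restrict (ball x δ)) (N ∪ (ball x δ)ᶜ) = 0 := by
    refine le_antisymm ((measure_union_le _ _).trans ?_) zero_le
    rw [Measure.restrict_apply measurableSet_ball.compl]
    simp [Measure.restrict_apply_eq_zero' measurableSet_ball, measure_mono_null inter_subset_left hN]
  have hfm : IsFiniteMeasure (volume.restrict (ball x δ)) := ⟨by simpa using measure_ball_lt_top⟩
  obtain ⟨z, hz, hGz⟩ := exists_notMem_null_le_laverage hμ hGm.aemeasurable hN'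
  simp only [mem_union, mem_compl_iff, not_or, not_not] at hz
  have hGz' : G z ≤ C * m := hGz.trans (hA δ hδ)
  refine ⟨z, hz.2, hz.1, hGz', fun ε hε hεδ => ?_⟩
  have hsub : ball x ε ⊆ ball x δ := ball_subset_ball hεδ
  have hint : IntegrableOn u (ball x ε) := hu.mono_set (hsub.trans hB)
  have hpr : IsProbabilityMeasure ((volume (ball x ε))⁻¹ • volume.restrict (ball x ε)) := by
    refine ⟨?_⟩
    simp [ENNReal.inv_mul_cancel (hvol0 ε hε) (hvolt ε)]
  have e1 : (⨍ y in ball x ε, u y) - u z = ⨍ y in ball x ε, (u y - u z) := by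
    simp only [average, Measure.restrict_apply_univ]
    rw [integral_sub, integral_const]
    · simp
    · refine Integrable.smul_measure hint ?_
      simpa using hvol0 ε hε
    · exact integrable_const _
  have hMt : K * (2 * (C * m)) ≠ ∞ := by finiteness
  have e2 : ‖⨍ y in ball x ε, (u y - u z)‖ₑ ≤ K * (2 * (C * m)) * ENNReal.ofReal (2 * δ) := by
    calc _ ≤ ⨍⁻ y in ball x ε, ‖u y - u z‖ₑ ∂volume := by
          simp only [average, laverage]; exact enorm_integral_le_lintegral_enorm _
      _ ≤ ⨍⁻ y in ball x ε, K * ENNReal.ofReal (2 * δ) * (G y + C * m) ∂volume := by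
          rw [setLAverage_eq, setLAverage_eq]
          gcongr 1
          apply lintegral_mono_ae
          rw [ae_restrict_iff' measurableSet_ball]
          filter_upwards [measure_eq_zero_iff_ae_notMem.1 hN] with y hy hyb
          refine (hub y (hB (hsub hyb)) z (hB hz.2) hy hz.1).trans ?_
          gcongr
          rw [← ofReal_norm]
          apply ENNReal.ofReal_le_ofReal
          rw [← dist_eq_norm]
          have h1 : dist y x < δ := hsub hyb
          have h2 : dist z x < δ := hz.2
          have := dist_triangle_right y z x
          linarith
      _ = K * ENNReal.ofReal (2 * δ) * ((⨍⁻ y in ball x ε, G y ∂volume) + C * m) := by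
          rw [setLAverage_eq, setLAverage_eq, lintegral_const_mul _ (by fun_prop), lintegral_add_right _ measurable_const,
            setLIntegral_const, mul_div_assoc, ENNReal.add_div, mul_div_assoc, ENNReal.div_self (hvol0 ε hε) (hvolt ε), mul_one]
      _ ≤ K * ENNReal.ofReal (2 * δ) * (C * m + C * m) := by
          gcongr; exact hA ε hε
      _ = _ := by ring
  rw [e1, ← toReal_enorm]
  calc _ ≤ (K * (2 * (C * m)) * ENNReal.ofReal (2 * δ)).toReal :=
        ENNReal.toReal_mono (by finiteness) e2
    _ = _ := by
        rw [ENNReal.toReal_mul, ENNReal.toReal_ofReal (by positivity)]; ring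

theorem preciseRep_lip {n : ℕ} {G : Euc n → ℝ≥0∞} (hGm : Measurable G) {C K : ℝ≥0∞}
    (hC : C ≠ ∞) (hK : K ≠ ∞)
    (A1 : ∀ x r, 0 < r → ∫⁻ y in ball x r, G y ≤ C * volume (ball x r) * G x)
    {u : Euc n → Euc n} {B : Set (Euc n)} (hBo : IsOpen B) (hu : IntegrableOn u B) {N : Set (Euc n)}
    (hN : volume N = 0)
    (hub : ∀ x ∈ B, ∀ y ∈ B, x ∉ N → y ∉ N → ‖u x - u y‖ₑ ≤ K * ‖x - y‖ₑ * (G x + G y))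
    (m : ℕ) : ∃ L, LipschitzOnWith L (preciseRepV u) (B ∩ {x | G x ≤ m}) := by
  set M := (K * (2 * (C * m))).toReal with hM
  have hM0 : 0 ≤ M := ENNReal.toReal_nonneg
  have gp := fun {x : Euc n} (hx : G x ≤ m) {δ : ℝ} (hδ : 0 < δ) (hB : ball x δ ⊆ B) =>
    good_point hGm hC hK A1 hu hN hub m hx hδ hB
  have hlim : ∀ x ∈ B ∩ {x | G x ≤ m},
      Tendsto (fun ε : ℝ => ⨍ y in ball x ε, u y) (𝓝[>] (0:ℝ)) (𝓝 (preciseRepV u x)) := by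
    rintro x ⟨hxB, hxm⟩
    have hex : ∃ L, Tendsto (fun ε : ℝ => ⨍ y in ball x ε, u y) (𝓝[>] (0:ℝ)) (𝓝 L) := by
      apply cauchy_map_iff_exists_tendsto.1
      rw [Metric.cauchy_iff]
      refine ⟨inferInstance, fun ε hε => ?_⟩
      obtain ⟨δ₀, hδ₀, hball⟩ := Metric.isOpen_iff.1 hBo x hxB
      set δ := min δ₀ (ε / (4 * M + 1) / 2) with hδ
      have hδpos : 0 < δ := by positivity
      obtain ⟨z, -, -, -, hz⟩ := gp hxm hδpos ((ball_subset_ball (min_le_left _ _)).trans hball)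
      refine ⟨(fun ε : ℝ => ⨍ y in ball x ε, u y) '' Ioo 0 δ, image_mem_map (Ioo_mem_nhdsGT hδpos), ?_⟩
      rintro _ ⟨s, hs, rfl⟩ _ ⟨t, ht, rfl⟩
      have h1 := hz s hs.1 hs.2.le
      have h2 := hz t ht.1 ht.2.le
      have h3 : δ ≤ ε / (4 * M + 1) / 2 := min_le_right _ _
      have h4 : (4 * M + 1) * (2 * δ) ≤ ε := by
        rw [le_div_iff₀ (by norm_num), le_div_iff₀ (by positivity)] at h3
        linarith
      calc _ ≤ dist (⨍ y in ball x s, u y) (u z) + dist (⨍ y in ball x t, u y) (u z) :=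
            dist_triangle_right _ _ _
        _ ≤ 2 * M * δ + 2 * M * δ := by
            rw [dist_eq_norm, dist_eq_norm]; exact add_le_add h1 h2
        _ < ε := by nlinarith
    unfold preciseRepV
    rw [dif_pos hex]
    exact hex.choose_spec
  refine ⟨M.toNNReal, LipschitzOnWith.of_dist_le_mul ?_⟩
  intro x hx y hy
  rw [Real.coe_toNNReal _ hM0]
  have l1 : Tendsto (fun ε : ℝ => dist (⨍ w in ball x ε, u w) (⨍ w in ball y ε, u w)) (𝓝[>] (0:ℝ))
      (𝓝 (dist (preciseRepV u x) (preciseRepV u y))) := (hlim x hx).dist (hlim y hy)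
  have l2 : Tendsto (fun ε : ℝ => M * dist x y + 6 * M * ε) (𝓝[>] (0:ℝ)) (𝓝 (M * dist x y)) := by
    have : Tendsto (fun ε : ℝ => M * dist x y + 6 * M * ε) (𝓝 (0:ℝ)) (𝓝 (M * dist x y + 6 * M * 0)) := by
      apply Continuous.tendsto; fun_prop
    rw [mul_zero, add_zero] at this
    exact this.mono_left nhdsWithin_le_nhds
  refine le_of_tendsto_of_tendsto l1 l2 ?_
  obtain ⟨δ₁, hδ₁, hb1⟩ := Metric.isOpen_iff.1 hBo x hx.1
  obtain ⟨δ₂, hδ₂, hb2⟩ := Metric.isOpen_iff.1 hBo y hy.1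
  filter_upwards [Ioo_mem_nhdsGT (lt_min hδ₁ hδ₂)] with ε hε
  have s1 : ball x ε ⊆ B := (ball_subset_ball (hε.2.le.trans (min_le_left _ _))).trans hb1
  have s2 : ball y ε ⊆ B := (ball_subset_ball (hε.2.le.trans (min_le_right _ _))).trans hb2
  obtain ⟨z, hz, hzN, hGz, hz'⟩ := gp hx.2 hε.1 s1
  obtain ⟨w, hw, hwN, hGw, hw'⟩ := gp hy.2 hε.1 s2
  have h1 := hz' ε hε.1 le_rfl
  have h2 := hw' ε hε.1 le_rfl
  have hMt : K * (2 * (C * m)) ≠ ∞ := by finiteness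
  have h3 : dist (u z) (u w) ≤ M * dist z w := by
    rw [dist_eq_norm, dist_eq_norm, ← toReal_enorm, ← toReal_enorm, hM, ← ENNReal.toReal_mul]
    apply ENNReal.toReal_mono (by finiteness)
    calc _ ≤ K * ‖z - w‖ₑ * (G z + G w) := hub z (s1 hz) w (s2 hw) hzN hwN
      _ ≤ K * ‖z - w‖ₑ * (C * m + C * m) := by gcongr
      _ = _ := by ring
  have h4 : dist z w ≤ dist x y + 2 * ε := by
    have := dist_triangle4 z x y w
    have a1 : dist z x < ε := hz
    have a2 : dist w y < ε := hw
    rw [dist_comm w y] at a2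
    linarith
  rw [← dist_eq_norm] at h1 h2
  have h5 := dist_triangle4_right (⨍ w in ball x ε, u w) (⨍ w in ball y ε, u w) (u z) (u w)
  have h6 : M * dist z w ≤ M * (dist x y + 2 * ε) := by gcongr
  change dist _ _ ≤ _
  nlinarith

noncomputable section

def pd {n : ℕ} (i : Fin n) (w : Euc n → ℝ) : Euc n → ℝ :=
  fun x => fderiv ℝ w x (EuclideanSpace.single i 1)

def hsum {n : ℕ} : ℕ → (Euc n → ℝ) → Euc n → ℝ≥0∞
  | 0, w => fun x => ‖w x‖ₑ
  | j + 1, w => fun x => ∑ i, hsum j (pd i w) x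

end

theorem pd_smooth {n : ℕ} {w : Euc n → ℝ} (hw : ContDiff ℝ (⊤ : ℕ∞) w) (i : Fin n) :
    ContDiff ℝ (⊤ : ℕ∞) (pd i w) := by
  have : ContDiff ℝ (⊤ : ℕ∞) (fderiv ℝ w) := hw.fderiv_right (by simp)
  exact this.clm_apply contDiff_const

theorem pd_compact {n : ℕ} {w : Euc n → ℝ} (hw : HasCompactSupport w) (i : Fin n) :
    HasCompactSupport (pd i w) := hw.fderiv_apply (𝕜 := ℝ) _

theorem pd_tsupport {n : ℕ} (w : Euc n → ℝ) (i : Fin n) :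
    tsupport (pd i w) ⊆ tsupport w := tsupport_fderiv_apply_subset ℝ _

theorem hsum_measurable {n : ℕ} (j : ℕ) : ∀ {w : Euc n → ℝ}, ContDiff ℝ (⊤ : ℕ∞) w →
    Measurable (hsum j w) := by
  induction j with
  | zero => intro w hw; exact hw.continuous.measurable.enorm
  | succ j ih =>
    intro w hw
    exact Finset.measurable_fun_sum _ fun i _ => ih (pd_smooth hw i)

theorem hsum_zero_of_notMem {n : ℕ} (j : ℕ) : ∀ {w : Euc n → ℝ} {x : Euc n}, x ∉ tsupport w →
    hsum j w x = 0 := by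
  induction j with
  | zero => intro w x hx; simp [hsum, image_eq_zero_of_notMem_tsupport hx]
  | succ j ih =>
    intro w x hx
    exact Finset.sum_eq_zero fun i _ => ih fun h => hx (pd_tsupport w i h)

theorem pd_add {n : ℕ} {u v : Euc n → ℝ} (hu : ContDiff ℝ (⊤ : ℕ∞) u) (hv : ContDiff ℝ (⊤ : ℕ∞) v)
    (i : Fin n) : pd i (u + v) = pd i u + pd i v := by
  ext x
  simp only [pd, Pi.add_apply]
  rw [fderiv_add (hu.differentiable (by simp) x) (hv.differentiable (by simp) x)]
  rfl

theorem pd_mul {n : ℕ} {u v : Euc n → ℝ} (hu : ContDiff ℝ (⊤ : ℕ∞) u) (hv : ContDiff ℝ (⊤ : ℕ∞) v)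
    (i : Fin n) : pd i (u * v) = pd i u * v + u * pd i v := by
  ext x
  simp only [pd, Pi.add_apply, Pi.mul_apply]
  rw [fderiv_mul (hu.differentiable (by simp) x) (hv.differentiable (by simp) x)]
  simp
  ring

theorem hsum_add {n : ℕ} (j : ℕ) : ∀ {u v : Euc n → ℝ}, ContDiff ℝ (⊤ : ℕ∞) u →
    ContDiff ℝ (⊤ : ℕ∞) v → ∀ x, hsum j (u + v) x ≤ hsum j u x + hsum j v x := by
  induction j with
  | zero => intro u v _ _ x; exact enorm_add_le _ _
  | succ j ih =>
    intro u v hu hv x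
    simp only [hsum]
    rw [← Finset.sum_add_distrib]
    refine Finset.sum_le_sum fun i _ => ?_
    rw [pd_add hu hv]
    exact ih (pd_smooth hu i) (pd_smooth hv i) x

theorem hsum_mul {n : ℕ} (j : ℕ) : ∀ {χ : Euc n → ℝ}, ContDiff ℝ (⊤ : ℕ∞) χ →
    HasCompactSupport χ → ∃ C : ℝ≥0∞, C ≠ ∞ ∧ ∀ u : Euc n → ℝ, ContDiff ℝ (⊤ : ℕ∞) u →
      ∀ x, hsum j (χ * u) x ≤ C * ∑ l ∈ Finset.range (j + 1), hsum l u x := by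
  induction j with
  | zero =>
    intro χ hχ hc
    obtain ⟨C, hC⟩ := hc.exists_bound_of_continuous hχ.continuous
    refine ⟨ENNReal.ofReal C, by simp, fun u _ x => ?_⟩
    simp only [hsum, Pi.mul_apply, enorm_mul, zero_add, Finset.range_one, Finset.sum_singleton]
    gcongr
    rw [← ofReal_norm]
    exact ENNReal.ofReal_le_ofReal (hC x)
  | succ j ih =>
    intro χ hχ hc
    obtain ⟨C, hC, hCu⟩ := ih hχ hc
    choose c hc1 hc2 using fun i => ih (pd_smooth hχ i) (pd_compact hc i)
    refine ⟨∑ i, c i + C, by simp [hC, hc1], fun u hu x => ?_⟩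
    have e1 : ∑ l ∈ Finset.range (j + 1), hsum l u x ≤ ∑ l ∈ Finset.range (j + 1 + 1), hsum l u x := by
      rw [Finset.sum_range_succ _ (j + 1)]; exact le_self_add
    have e2 : ∑ i, ∑ l ∈ Finset.range (j + 1), hsum l (pd i u) x
        ≤ ∑ l ∈ Finset.range (j + 1 + 1), hsum l u x := by
      rw [Finset.sum_comm, Finset.sum_range_succ' _ (j + 1)]; exact le_self_add
    calc hsum (j + 1) (χ * u) x = ∑ i, hsum j (pd i χ * u + χ * pd i u) x := by
          simp only [hsum, pd_mul hχ hu]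
      _ ≤ ∑ i, (c i * ∑ l ∈ Finset.range (j + 1), hsum l u x
            + C * ∑ l ∈ Finset.range (j + 1), hsum l (pd i u) x) := by
          refine Finset.sum_le_sum fun i _ => ?_
          refine (hsum_add j ((pd_smooth hχ i).mul hu) (hχ.mul (pd_smooth hu i)) x).trans ?_
          exact add_le_add (hc2 i u hu x) (hCu _ (pd_smooth hu i) x)
      _ = (∑ i, c i) * ∑ l ∈ Finset.range (j + 1), hsum l u x
            + C * ∑ i, ∑ l ∈ Finset.range (j + 1), hsum l (pd i u) x := by
          rw [Finset.sum_add_distrib, Finset.sum_mul, Finset.mul_sum]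
      _ ≤ _ := by
          rw [add_mul]; gcongr

theorem fderiv_le_hsum {n : ℕ} (w : Euc n → ℝ) (x z : Euc n) :
    ‖fderiv ℝ w x z‖ₑ ≤ ‖z‖ₑ * hsum 1 w x := by
  have hz : z = ∑ i, z i • EuclideanSpace.single i (1 : ℝ) := by
    ext j
    simp [Finset.sum_apply, Pi.single_apply]
  have : fderiv ℝ w x z = ∑ i, z i * pd i w x := by
    conv_lhs => rw [hz]
    simp [pd]
  rw [this]
  refine (enorm_sum_le _ _).trans ?_
  simp only [hsum]
  rw [Finset.mul_sum]
  refine Finset.sum_le_sum fun i _ => ?_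
  rw [enorm_mul]
  gcongr
  rw [← ofReal_norm, ← ofReal_norm]
  exact ENNReal.ofReal_le_ofReal (PiLp.norm_apply_le z i)

theorem line_est0 {n : ℕ} {w : Euc n → ℝ} (hw : ContDiff ℝ (⊤ : ℕ∞) w) (hc : HasCompactSupport w)
    {z : Euc n} (hz : z ≠ 0) (x : Euc n) :
    ‖w x‖ₑ ≤ ‖z‖ₑ * ∫⁻ t in Ioi (0:ℝ), hsum 1 w (x + t • z) := by
  have hm : Measurable (fun t : ℝ => hsum 1 w (x + t • z)) :=
    (hsum_measurable 1 hw).comp (by fun_prop)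
  set f : ℝ → ℝ := fun s => w (x - s • z) with hf
  have hfd : ContDiff ℝ 1 f := (hw.of_le (by exact_mod_cast le_top)).comp (by fun_prop)
  have hfc : HasCompactSupport f := by
    have : Topology.IsClosedEmbedding (fun s : ℝ => x - s • z) :=
      (Homeomorph.subLeft x).isClosedEmbedding.comp (isClosedEmbedding_smul_left hz)
    exact hc.comp_isClosedEmbedding this
  have h1 := hfc.enorm_le_lintegral_Ici_deriv hfd 0
  have h0 : f 0 = w x := by simp [hf]
  rw [h0] at h1
  refine h1.trans ?_
  have hd : ∀ s, ‖deriv f s‖ₑ ≤ ‖z‖ₑ * hsum 1 w (x + (-s) • z) := by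
    intro s
    have h2 : HasDerivAt (fun s : ℝ => x - s • z) (-z) s := by
      simpa using ((hasDerivAt_id s).smul_const z).const_sub x
    have h3 : HasDerivAt f (fderiv ℝ w (x - s • z) (-z)) s :=
      ((hw.differentiable (by simp)) (x - s • z)).hasFDerivAt.comp_hasDerivAt s h2
    rw [h3.deriv]
    have := fderiv_le_hsum w (x - s • z) (-z)
    rw [enorm_neg] at this
    simpa [sub_eq_add_neg] using this
  calc _ ≤ ∫⁻ s in Iic (0:ℝ), ‖z‖ₑ * hsum 1 w (x + (-s) • z) := lintegral_mono hd
    _ = ∫⁻ s in Neg.neg ⁻¹' (Ici (0:ℝ)), ‖z‖ₑ * hsum 1 w (x + (-s) • z) := by simp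
    _ = ∫⁻ t in Ici (0:ℝ), ‖z‖ₑ * hsum 1 w (x + t • z) :=
        (Measure.measurePreserving_neg (volume : Measure ℝ)).setLIntegral_comp_preimage measurableSet_Ici
          (f := fun t => ‖z‖ₑ * hsum 1 w (x + t • z)) (by fun_prop)
    _ = ‖z‖ₑ * ∫⁻ t in Ici (0:ℝ), hsum 1 w (x + t • z) := lintegral_const_mul _ (by fun_prop)
    _ = _ := by rw [Measure.restrict_congr_set Ioi_ae_eq_Ici]

theorem line_est1 {n : ℕ} (j : ℕ) : ∀ {w : Euc n → ℝ}, ContDiff ℝ (⊤ : ℕ∞) w →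
    HasCompactSupport w → ∀ {z : Euc n}, z ≠ 0 → ∀ x : Euc n,
    hsum j w x ≤ ‖z‖ₑ * ∫⁻ t in Ioi (0:ℝ), hsum (j + 1) w (x + t • z) := by
  induction j with
  | zero => intro w hw hc z hz x; exact line_est0 hw hc hz x
  | succ j ih =>
    intro w hw hc z hz x
    have e : ∫⁻ t in Ioi (0:ℝ), hsum (j + 1 + 1) w (x + t • z)
        = ∑ i, ∫⁻ t in Ioi (0:ℝ), hsum (j + 1) (pd i w) (x + t • z) := by
      rw [← lintegral_finsetSum]
      · rfl
      · intro i _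
        exact (hsum_measurable _ (pd_smooth hw i)).comp (by fun_prop)
    rw [e, Finset.mul_sum]
    exact Finset.sum_le_sum fun i _ => ih (pd_smooth hw i) (pd_compact hc i) hz x

theorem lintegral_tail {F : ℝ → ℝ≥0∞} (hF : Measurable F) (t : ℝ) :
    ∫⁻ s in Ioi (0:ℝ), F (t + s) = ∫⁻ s in Ioi t, F s := by
  have := (measurePreserving_add_left (volume : Measure ℝ) t).setLIntegral_comp_preimage
    (measurableSet_Ioi (a := t)) hF
  rw [← this]
  congr 2
  ext s; simp

theorem lintegral_iter {F : ℝ → ℝ≥0∞} (hF : Measurable F) (m : ℕ) :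
    ∫⁻ t in Ioi (0:ℝ), ENNReal.ofReal (t ^ m) * ∫⁻ s in Ioi (0:ℝ), F (t + s)
      ≤ ∫⁻ s in Ioi (0:ℝ), ENNReal.ofReal (s ^ (m + 1)) * F s := by
  have h1 : ∀ t : ℝ, ENNReal.ofReal (t ^ m) * ∫⁻ s in Ioi (0:ℝ), F (t + s)
      = ∫⁻ s, ENNReal.ofReal (t ^ m) * (Ioi t).indicator F s := by
    intro t
    rw [lintegral_tail hF, lintegral_const_mul _ (hF.indicator measurableSet_Ioi),
      lintegral_indicator measurableSet_Ioi]
  simp_rw [h1]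
  have hmm : Measurable (fun q : ℝ × ℝ => ENNReal.ofReal (q.1 ^ m) * (Ioi q.1).indicator F q.2) := by
    have : (fun q : ℝ × ℝ => (Ioi q.1).indicator F q.2)
        = {q : ℝ × ℝ | q.1 < q.2}.indicator (fun q => F q.2) := by
      ext q; simp [indicator]
    refine Measurable.mul (by fun_prop) ?_
    rw [this]
    exact (hF.comp measurable_snd).indicator (measurableSet_lt measurable_fst measurable_snd)
  rw [lintegral_lintegral_swap hmm.aemeasurable, ← lintegral_indicator measurableSet_Ioi]
  refine lintegral_mono fun s => ?_
  by_cases hs : 0 < s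
  · rw [indicator_of_mem (mem_Ioi.2 hs)]
    calc _ ≤ ∫⁻ t in Ioi (0:ℝ), (Iio s).indicator (fun _ => ENNReal.ofReal (s ^ m) * F s) t := by
          refine setLIntegral_mono' measurableSet_Ioi fun t ht => ?_
          have ht' : 0 < t := ht
          by_cases hts : t < s
          · rw [indicator_of_mem (mem_Ioi.2 hts), indicator_of_mem (mem_Iio.2 hts)]
            gcongr
          · rw [indicator_of_notMem (by simpa using hts)]; simp
      _ = ENNReal.ofReal (s ^ m) * F s * volume (Iio s ∩ Ioi 0) := by
          rw [lintegral_indicator measurableSet_Iio, Measure.restrict_restrict measurableSet_Iio,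
            setLIntegral_const]
      _ = _ := by
          rw [inter_comm, Ioi_inter_Iio, Real.volume_Ioo, sub_zero, pow_succ,
            ENNReal.ofReal_mul (by positivity)]
          ring
  · rw [indicator_of_notMem (by simpa using hs)]
    rw [nonpos_iff_eq_zero]
    rw [setLIntegral_congr_fun (g := fun _ => 0) measurableSet_Ioi]
    · simp
    · intro t ht
      have ht' : 0 < t := ht
      simp only
      rw [indicator_of_notMem]
      · simp
      · simp only [mem_Ioi]; linarith

theorem line_est {n : ℕ} (j m : ℕ) {w : Euc n → ℝ} (hw : ContDiff ℝ (⊤ : ℕ∞) w)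
    (hc : HasCompactSupport w) {z : Euc n} (hz : z ≠ 0) (x : Euc n) :
    hsum j w x ≤ ‖z‖ₑ ^ (m + 1) *
      ∫⁻ t in Ioi (0:ℝ), ENNReal.ofReal (t ^ m) * hsum (j + m + 1) w (x + t • z) := by
  induction m with
  | zero => simpa using line_est1 j hw hc hz x
  | succ m ih =>
    have hm : Measurable (fun t : ℝ => hsum (j + (m + 1) + 1) w (x + t • z)) :=
      (hsum_measurable _ hw).comp (by fun_prop)
    have hm2 : Measurable (fun q : ℝ × ℝ => hsum (j + (m + 1) + 1) w (x + (q.1 + q.2) • z)) :=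
      (hsum_measurable _ hw).comp (by fun_prop)
    refine ih.trans ?_
    rw [pow_succ _ (m + 1), mul_assoc]
    gcongr
    calc _ ≤ ∫⁻ t in Ioi (0:ℝ), ‖z‖ₑ * (ENNReal.ofReal (t ^ m) *
            ∫⁻ s in Ioi (0:ℝ), hsum (j + (m + 1) + 1) w (x + (t + s) • z)) := by
          refine lintegral_mono fun t => ?_
          have := line_est1 (j + m + 1) hw hc hz (x + t • z)
          simp only [add_assoc, ← add_smul] at this ⊢
          calc _ ≤ _ := mul_le_mul_right this _
            _ = _ := by ring
      _ = ‖z‖ₑ * ∫⁻ t in Ioi (0:ℝ), (ENNReal.ofReal (t ^ m) *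
            ∫⁻ s in Ioi (0:ℝ), hsum (j + (m + 1) + 1) w (x + (t + s) • z)) := by
          refine lintegral_const_mul _ ?_
          exact Measurable.mul (by fun_prop) (Measurable.lintegral_prod_right hm2)
      _ ≤ _ := by
          exact mul_le_mul_right (lintegral_iter hm m) _

theorem cone_inner {n : ℕ} (m : ℕ) (x y : Euc n) :
    ∫⁻ t in Ioi (0:ℝ), ENNReal.ofReal (t ^ m * (t ^ n)⁻¹) *
      {z : Euc n | 1 < ‖z‖ ∧ ‖z‖ < 2}.indicator 1 (t⁻¹ • (y - x))
      ≤ 2 ^ n * ENNReal.ofReal (‖x - y‖ ^ (((m + 1 : ℕ) : ℝ) - n)) := by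
  set d := ‖x - y‖ with hd
  have hd0 : 0 ≤ d := norm_nonneg _
  have key : ∀ t : ℝ, 0 < t → t⁻¹ • (y - x) ∈ {z : Euc n | 1 < ‖z‖ ∧ ‖z‖ < 2} →
      d / 2 < t ∧ t < d := by
    intro t ht h
    simp only [mem_ofPred_eq, norm_smul, norm_inv, Real.norm_eq_abs, abs_of_pos ht] at h
    rw [norm_sub_rev, ← hd, inv_mul_eq_div, lt_div_iff₀ ht, div_lt_iff₀ ht] at h
    constructor <;> linarith
  rcases hd0.eq_or_lt with h0 | hpos
  · refine le_trans (le_of_eq ?_) zero_le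
    rw [setLIntegral_congr_fun (g := fun _ => 0) measurableSet_Ioi]
    · simp
    · intro t ht
      simp only
      rw [indicator_of_notMem, mul_zero]
      intro h
      have := key t ht h
      linarith
  · calc _ ≤ ∫⁻ t in Ioi (0:ℝ), (Ioo (d / 2) d).indicator
            (fun _ => ENNReal.ofReal (d ^ m * ((d / 2) ^ n)⁻¹)) t := by
          refine setLIntegral_mono' measurableSet_Ioi fun t ht => ?_
          have ht' : 0 < t := ht
          by_cases h : t⁻¹ • (y - x) ∈ {z : Euc n | 1 < ‖z‖ ∧ ‖z‖ < 2}
          · obtain ⟨h1, h2⟩ := key t ht' h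
            rw [indicator_of_mem h, indicator_of_mem (show t ∈ Ioo (d / 2) d from ⟨h1, h2⟩), Pi.one_apply, mul_one]
            apply ENNReal.ofReal_le_ofReal
            gcongr
          · rw [indicator_of_notMem h, mul_zero]; exact zero_le
      _ ≤ ∫⁻ t, (Ioo (d / 2) d).indicator
            (fun _ => ENNReal.ofReal (d ^ m * ((d / 2) ^ n)⁻¹)) t := setLIntegral_le_lintegral _ _
      _ = ENNReal.ofReal (d ^ m * ((d / 2) ^ n)⁻¹) * ENNReal.ofReal (d / 2) := by
          rw [lintegral_indicator measurableSet_Ioo, setLIntegral_const, Real.volume_Ioo]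
          congr 2; ring
      _ ≤ _ := by
          have : (2:ℝ≥0∞) ^ n = ENNReal.ofReal (2 ^ n) := by
            rw [ENNReal.ofReal_pow (by norm_num)]; norm_num
          rw [this, ← ENNReal.ofReal_mul (by positivity), ← ENNReal.ofReal_mul (by positivity)]
          apply ENNReal.ofReal_le_ofReal
          rw [Real.rpow_sub hpos, Real.rpow_natCast, Real.rpow_natCast, div_pow]
          have e : d ^ m * (d ^ n / 2 ^ n)⁻¹ * (d / 2) = (2 ^ n * (d ^ (m + 1) / d ^ n)) / 2 := by
            field_simp
            ring
          rw [e]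
          have : 0 ≤ 2 ^ n * (d ^ (m + 1) / d ^ n) := by positivity
          linarith

theorem measurableSet_annulus (n : ℕ) : MeasurableSet {z : Euc n | 1 < ‖z‖ ∧ ‖z‖ < 2} :=
  (measurableSet_lt measurable_const measurable_norm).inter
    (measurableSet_lt measurable_norm measurable_const)

theorem cone_est {n : ℕ} (m : ℕ) {F : Euc n → ℝ≥0∞} (hF : Measurable F) (x : Euc n) :
    ∫⁻ z in {z : Euc n | 1 < ‖z‖ ∧ ‖z‖ < 2}, ∫⁻ t in Ioi (0:ℝ), ENNReal.ofReal (t ^ m) * F (x + t • z)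
      ≤ 2 ^ n * rpot ((m + 1 : ℕ) : ℝ) F x := by
  set A : Set (Euc n) := {z : Euc n | 1 < ‖z‖ ∧ ‖z‖ < 2} with hA
  have mA : MeasurableSet A := measurableSet_annulus n
  have m1 : Measurable (A.indicator (1 : Euc n → ℝ≥0∞)) := measurable_one.indicator mA
  calc _ = ∫⁻ t in Ioi (0:ℝ), ∫⁻ z in A, ENNReal.ofReal (t ^ m) * F (x + t • z) := by
        refine lintegral_lintegral_swap (Measurable.aemeasurable ?_)
        exact Measurable.mul (by fun_prop) (hF.comp (by fun_prop))
    _ = ∫⁻ t in Ioi (0:ℝ), ∫⁻ y, F y * (ENNReal.ofReal (t ^ m * (t ^ n)⁻¹) *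
          A.indicator 1 (t⁻¹ • (y - x))) := by
        refine setLIntegral_congr_fun measurableSet_Ioi fun t ht => ?_
        have ht' : 0 < t := ht
        have hG : Measurable (fun y : Euc n => A.indicator (1 : Euc n → ℝ≥0∞) (t⁻¹ • (y - x)) * F y) :=
          Measurable.mul (m1.comp (by fun_prop)) hF
        have := lintegral_affine hG x ht'
        rw [lintegral_const_mul' _ _ ENNReal.ofReal_ne_top, ← lintegral_indicator mA]
        have e1 : ∫⁻ z, A.indicator (fun z => F (x + t • z)) z =
            ∫⁻ z, A.indicator (1 : Euc n → ℝ≥0∞) (t⁻¹ • ((x + t • z) - x)) * F (x + t • z) := by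
          refine lintegral_congr fun z => ?_
          rw [add_sub_cancel_left, inv_smul_smul₀ ht'.ne']
          by_cases hz : z ∈ A <;> simp [hz]
        rw [e1, this, ← mul_assoc, ← ENNReal.ofReal_mul (by positivity), ← lintegral_const_mul _ hG]
        refine lintegral_congr fun y => ?_
        ring
    _ = ∫⁻ y, ∫⁻ t in Ioi (0:ℝ), F y * (ENNReal.ofReal (t ^ m * (t ^ n)⁻¹) *
          A.indicator 1 (t⁻¹ • (y - x))) := by
        refine lintegral_lintegral_swap (Measurable.aemeasurable ?_)
        exact Measurable.mul (hF.comp measurable_snd) (Measurable.mul (by fun_prop) (m1.comp (by fun_prop)))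
    _ = ∫⁻ y, F y * ∫⁻ t in Ioi (0:ℝ), (ENNReal.ofReal (t ^ m * (t ^ n)⁻¹) *
          A.indicator 1 (t⁻¹ • (y - x))) := by
        refine lintegral_congr fun y => lintegral_const_mul _ ?_
        exact Measurable.mul (by fun_prop) (m1.comp (by fun_prop))
    _ ≤ ∫⁻ y, F y * (2 ^ n * ENNReal.ofReal (‖x - y‖ ^ (((m + 1 : ℕ) : ℝ) - n))) :=
        lintegral_mono fun y => mul_le_mul_right (cone_inner m x y) _
    _ = ∫⁻ y, 2 ^ n * (F y * ENNReal.ofReal (‖x - y‖ ^ (((m + 1 : ℕ) : ℝ) - n))) :=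
        lintegral_congr fun y => by ring
    _ = _ := by
        rw [lintegral_const_mul' _ _ (by finiteness)]; rfl

theorem volume_annulus {n : ℕ} (hn : 0 < n) :
    volume {z : Euc n | 1 < ‖z‖ ∧ ‖z‖ < 2} ≠ 0 ∧ volume {z : Euc n | 1 < ‖z‖ ∧ ‖z‖ < 2} ≠ ∞ := by
  constructor
  · refine ((measure_ball_pos volume (EuclideanSpace.single (⟨0, hn⟩ : Fin n) (3/2 : ℝ))
      (by norm_num : (0:ℝ) < 1/2)).trans_le (measure_mono ?_)).ne'
    intro z hz
    have h1 : ‖z - EuclideanSpace.single (⟨0, hn⟩ : Fin n) (3/2 : ℝ)‖ < 1/2 := by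
      simpa [dist_eq_norm] using hz
    have h2 : ‖EuclideanSpace.single (⟨0, hn⟩ : Fin n) (3/2 : ℝ)‖ = 3/2 := by
      simp
    have h3 := abs_norm_sub_norm_le z (EuclideanSpace.single (⟨0, hn⟩ : Fin n) (3/2 : ℝ))
    rw [h2] at h3
    have := abs_lt.1 (h3.trans_lt h1)
    constructor <;> linarith
  · refine ((measure_mono ?_).trans_lt (measure_ball_lt_top (μ := volume) (x := (0 : Euc n)) (r := 2))).ne
    intro z hz
    simpa using hz.2

theorem riesz_est {n : ℕ} (hn : 0 < n) (m : ℕ) : ∃ C : ℝ≥0∞, C ≠ ∞ ∧ ∀ w : Euc n → ℝ,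
    ContDiff ℝ (⊤ : ℕ∞) w → HasCompactSupport w → ∀ x,
      hsum 1 w x ≤ C * rpot ((m + 1 : ℕ) : ℝ) (hsum (m + 2) w) x := by
  obtain ⟨hv0, hvt⟩ := volume_annulus hn
  set A : Set (Euc n) := {z : Euc n | 1 < ‖z‖ ∧ ‖z‖ < 2} with hA
  have mA : MeasurableSet A := measurableSet_annulus n
  refine ⟨(volume A)⁻¹ * (2 ^ (m + 1) * 2 ^ n), by finiteness, fun w hw hc x => ?_⟩
  have hm : Measurable (hsum (m + 2) w) := hsum_measurable _ hw
  have h1 : hsum 1 w x * volume A ≤ 2 ^ (m + 1) * (2 ^ n * rpot ((m + 1 : ℕ) : ℝ) (hsum (m + 2) w) x) := by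
    rw [← setLIntegral_const]
    calc _ ≤ ∫⁻ z in A, 2 ^ (m + 1) * ∫⁻ t in Ioi (0:ℝ),
            ENNReal.ofReal (t ^ m) * hsum (m + 2) w (x + t • z) := by
          refine setLIntegral_mono' mA fun z hz => ?_
          have hz0 : z ≠ 0 := by
            rintro rfl
            have := hz.1
            norm_num at this
          have := line_est 1 m hw hc hz0 x
          rw [show 1 + m + 1 = m + 2 by ring] at this
          refine this.trans ?_
          refine mul_le_mul_left (pow_le_pow_left' ?_ _) _
          rw [← ofReal_norm]
          exact ENNReal.ofReal_le_of_le_toReal (by simpa using hz.2.le)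
      _ = 2 ^ (m + 1) * ∫⁻ z in A, ∫⁻ t in Ioi (0:ℝ),
            ENNReal.ofReal (t ^ m) * hsum (m + 2) w (x + t • z) :=
          lintegral_const_mul' _ _ (by finiteness)
      _ ≤ _ := mul_le_mul_right (cone_est m hm x) _
  rw [mul_comm] at h1
  calc hsum 1 w x = (volume A)⁻¹ * (volume A * hsum 1 w x) := by
        rw [← mul_assoc, ENNReal.inv_mul_cancel hv0 hvt, one_mul]
    _ ≤ (volume A)⁻¹ * (2 ^ (m + 1) * (2 ^ n * rpot ((m + 1 : ℕ) : ℝ) (hsum (m + 2) w) x)) := by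
        exact mul_le_mul_right h1 _
    _ = _ := by ring

theorem segment_est {n : ℕ} {w : Euc n → ℝ} (hw : ContDiff ℝ (⊤ : ℕ∞) w) (x z : Euc n) :
    ‖w z - w x‖ₑ ≤ ‖z - x‖ₑ * ∫⁻ t in Ioo (0:ℝ) 1, hsum 1 w (x + t • (z - x)) := by
  have hm : Measurable (fun t : ℝ => hsum 1 w (x + t • (z - x))) :=
    (hsum_measurable 1 hw).comp (by fun_prop)
  have hd : ∀ t : ℝ, HasDerivAt (fun t : ℝ => w (x + t • (z - x)))
      (fderiv ℝ w (x + t • (z - x)) (z - x)) t := by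
    intro t
    have h2 : HasDerivAt (fun s : ℝ => x + s • (z - x)) (z - x) t := by
      simpa using ((hasDerivAt_id t).smul_const (z - x)).const_add x
    exact ((hw.differentiable (by simp)) (x + t • (z - x))).hasFDerivAt.comp_hasDerivAt t h2
  have hcont : Continuous fun t : ℝ => fderiv ℝ w (x + t • (z - x)) (z - x) := by
    have : Continuous (fderiv ℝ w) := hw.continuous_fderiv (by simp)
    exact (this.comp (by fun_prop)).clm_apply continuous_const
  have h1 := intervalIntegral.integral_eq_sub_of_hasDerivAt (a := 0) (b := 1) (fun t _ => hd t)
    (hcont.intervalIntegrable _ _)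
  simp only [one_smul, zero_smul, add_zero, add_sub_cancel] at h1
  rw [← h1, intervalIntegral.integral_of_le zero_le_one]
  refine (enorm_integral_le_lintegral_enorm _).trans ?_
  rw [← lintegral_const_mul _ hm, Measure.restrict_congr_set Ioo_ae_eq_Ioc]
  exact lintegral_mono fun t => fderiv_le_hsum _ _ _

theorem ball_est {n : ℕ} {w : Euc n → ℝ} (hw : ContDiff ℝ (⊤ : ℕ∞) w) {G : Euc n → ℝ≥0∞}
    (hGm : Measurable G) {C : ℝ≥0∞}
    (A1 : ∀ x r, 0 < r → ∫⁻ y in ball x r, G y ≤ C * volume (ball x r) * G x)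
    (hG : ∀ x, hsum 1 w x ≤ G x) (x : Euc n) {r : ℝ} (hr : 0 < r) :
    ∫⁻ z in ball x r, ‖w z - w x‖ₑ ≤ ENNReal.ofReal r * (C * volume (ball x r) * G x) := by
  calc _ ≤ ∫⁻ z in ball x r, ENNReal.ofReal r * ∫⁻ t in Ioo (0:ℝ) 1, G (x + t • (z - x)) := by
        refine setLIntegral_mono' measurableSet_ball fun z hz => ?_
        refine (segment_est hw x z).trans ?_
        refine mul_le_mul' ?_ (lintegral_mono fun t => hG _)
        rw [← ofReal_norm, ← dist_eq_norm]
        exact ENNReal.ofReal_le_ofReal (mem_ball.1 hz).le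
    _ = ENNReal.ofReal r * ∫⁻ z in ball x r, ∫⁻ t in Ioo (0:ℝ) 1, G (x + t • (z - x)) :=
        lintegral_const_mul' _ _ ENNReal.ofReal_ne_top
    _ = ENNReal.ofReal r * ∫⁻ t in Ioo (0:ℝ) 1, ∫⁻ z in ball x r, G (x + t • (z - x)) := by
        congr 1
        refine lintegral_lintegral_swap (Measurable.aemeasurable ?_)
        exact hGm.comp (by fun_prop)
    _ ≤ ENNReal.ofReal r * ∫⁻ t in Ioo (0:ℝ) 1, C * volume (ball x r) * G x := by
        refine mul_le_mul_right (setLIntegral_mono' measurableSet_Ioo fun t ht => ?_) _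
        have ht0 : 0 < t := ht.1
        have hF : Measurable ((ball x (t * r)).indicator G) := hGm.indicator measurableSet_ball
        have e1 : ∫⁻ z in ball x r, G (x + t • (z - x))
            = ∫⁻ z, (ball x (t * r)).indicator G ((x - t • x) + t • z) := by
          rw [← lintegral_indicator measurableSet_ball]
          refine lintegral_congr fun z => ?_
          have e2 : (x - t • x) + t • z = x + t • (z - x) := by rw [smul_sub]; abel
          rw [e2]
          have e3 : z ∈ ball x r ↔ x + t • (z - x) ∈ ball x (t * r) := by
            simp only [mem_ball, dist_eq_norm, add_sub_cancel_left, norm_smul, Real.norm_eq_abs,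
              abs_of_pos ht0]
            exact (mul_lt_mul_iff_right₀ ht0).symm
          by_cases hz : z ∈ ball x r
          · rw [indicator_of_mem hz, indicator_of_mem (e3.1 hz)]
          · rw [indicator_of_notMem hz, indicator_of_notMem (fun h => hz (e3.2 h))]
        rw [e1, lintegral_affine hF _ ht0, lintegral_indicator measurableSet_ball]
        refine (mul_le_mul_right (A1 x (t * r) (by positivity)) _).trans (le_of_eq ?_)
        rw [Measure.addHaar_ball_mul_of_pos _ _ ht0, ← Measure.addHaar_ball_center volume x r]
        simp only [finrank_euclideanSpace, Fintype.card_fin]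
        have : ENNReal.ofReal ((t ^ n)⁻¹) * ENNReal.ofReal (t ^ n) = 1 := by
          rw [← ENNReal.ofReal_mul (by positivity), inv_mul_cancel₀ (by positivity)]; simp
        calc _ = (ENNReal.ofReal ((t ^ n)⁻¹) * ENNReal.ofReal (t ^ n)) * (C * volume (ball x r) * G x) := by
              rw [Measure.addHaar_ball_center volume x r]; ring
          _ = _ := by rw [this, one_mul]
    _ = _ := by rw [setLIntegral_const]; simp

theorem pointwise_est {n : ℕ} {w : Euc n → ℝ} (hw : ContDiff ℝ (⊤ : ℕ∞) w) {G : Euc n → ℝ≥0∞}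
    (hGm : Measurable G) {C : ℝ≥0∞}
    (A1 : ∀ x r, 0 < r → ∫⁻ y in ball x r, G y ≤ C * volume (ball x r) * G x)
    (hG : ∀ x, hsum 1 w x ≤ G x) (x y : Euc n) :
    ‖w x - w y‖ₑ ≤ (2 ^ n * C) * ‖x - y‖ₑ * (G x + G y) := by
  rcases eq_or_ne x y with rfl | hxy
  · simp
  set d := dist x y with hd
  have hdp : 0 < d := dist_pos.2 hxy
  set c := midpoint ℝ x y with hc
  set V := volume (ball c (d / 2)) with hV
  have hV0 : V ≠ 0 := (measure_ball_pos _ _ (by positivity)).ne'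
  have hVt : V ≠ ∞ := measure_ball_lt_top.ne
  have hVd : ∀ q : Euc n, volume (ball q d) = 2 ^ n * V := by
    intro q
    have : d = 2 * (d / 2) := by ring
    rw [hV, Measure.addHaar_ball_center volume c, Measure.addHaar_ball_center volume q]
    conv_lhs => rw [this]
    rw [Measure.addHaar_ball_mul_of_pos _ _ (by norm_num : (0:ℝ) < 2)]
    simp only [finrank_euclideanSpace, Fintype.card_fin]
    rw [Measure.addHaar_ball_center, ENNReal.ofReal_pow (by norm_num)]; norm_num
  have s1 : ball c (d / 2) ⊆ ball x d := by
    apply ball_subset_ball'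
    rw [hc, dist_midpoint_left]; norm_num; rw [← hd]; linarith
  have s2 : ball c (d / 2) ⊆ ball y d := by
    apply ball_subset_ball'
    rw [hc, dist_midpoint_right]; norm_num; rw [← hd]; linarith
  have hwm : Measurable w := hw.continuous.measurable
  have key : ‖w x - w y‖ₑ * V ≤ V * ((2 ^ n * C) * ‖x - y‖ₑ * (G x + G y)) := by
    rw [← setLIntegral_const]
    calc _ ≤ ∫⁻ z in ball c (d / 2), (‖w z - w x‖ₑ + ‖w z - w y‖ₑ) := by
          refine lintegral_mono fun z => ?_
          have : w x - w y = (w z - w y) - (w z - w x) := by ring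
          rw [this, add_comm]
          exact enorm_sub_le
      _ = (∫⁻ z in ball c (d / 2), ‖w z - w x‖ₑ) + ∫⁻ z in ball c (d / 2), ‖w z - w y‖ₑ :=
          lintegral_add_left (by fun_prop) _
      _ ≤ (∫⁻ z in ball x d, ‖w z - w x‖ₑ) + ∫⁻ z in ball y d, ‖w z - w y‖ₑ :=
          add_le_add (lintegral_mono_set s1) (lintegral_mono_set s2)
      _ ≤ _ := add_le_add (ball_est hw hGm A1 hG x hdp) (ball_est hw hGm A1 hG y hdp)
      _ = _ := by
          rw [hVd, hVd, hd, dist_eq_norm, ofReal_norm]; ring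
  calc ‖w x - w y‖ₑ = V⁻¹ * (‖w x - w y‖ₑ * V) := by
        rw [mul_comm _ V, ← mul_assoc, ENNReal.inv_mul_cancel hV0 hVt, one_mul]
    _ ≤ V⁻¹ * (V * ((2 ^ n * C) * ‖x - y‖ₑ * (G x + G y))) := mul_le_mul_right key _
    _ = _ := by rw [← mul_assoc, ENNReal.inv_mul_cancel hV0 hVt, one_mul]

theorem listDeriv_smooth {n : ℕ} {w : Euc n → ℝ} (hw : ContDiff ℝ (⊤ : ℕ∞) w) (l : List (Fin n)) :
    ContDiff ℝ (⊤ : ℕ∞) (listDeriv l w) := by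
  induction l with
  | nil => exact hw
  | cons i l ih => exact pd_smooth ih i

theorem listDeriv_compact {n : ℕ} {w : Euc n → ℝ} (hw : HasCompactSupport w) (l : List (Fin n)) :
    HasCompactSupport (listDeriv l w) := by
  induction l with
  | nil => exact hw
  | cons i l ih => exact pd_compact ih i

theorem pd_comm {n : ℕ} {w : Euc n → ℝ} (hw : ContDiff ℝ (⊤ : ℕ∞) w) (i j : Fin n) :
    pd i (pd j w) = pd j (pd i w) := by
  have hd : Differentiable ℝ (fderiv ℝ w) := by
    have : ContDiff ℝ (⊤ : ℕ∞) (fderiv ℝ w) := hw.fderiv_right (by simp)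
    exact this.differentiable (by simp)
  have e : ∀ (a b : Fin n) x, pd a (pd b w) x =
      fderiv ℝ (fderiv ℝ w) x (EuclideanSpace.single a 1) (EuclideanSpace.single b 1) := by
    intro a b x
    have : HasFDerivAt (pd b w) _ x := (hd x).hasFDerivAt.clm_apply
      (hasFDerivAt_const (EuclideanSpace.single b (1:ℝ)) x)
    rw [pd, this.fderiv]
    simp
  ext x
  rw [e, e]
  have : IsSymmSndFDerivAt ℝ w x := (hw.contDiffAt).isSymmSndFDerivAt (by
    rw [minSmoothness_of_isRCLikeNormedField]
    exact WithTop.coe_le_coe.2 (le_top : (2 : ℕ∞) ≤ ⊤))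
  exact this _ _

theorem listDeriv_perm {n : ℕ} {l l' : List (Fin n)} (h : l.Perm l') :
    ∀ {w : Euc n → ℝ}, ContDiff ℝ (⊤ : ℕ∞) w → listDeriv l w = listDeriv l' w := by
  induction h with
  | nil => intros; rfl
  | cons i _ ih => intro w hw; simp only [listDeriv]; rw [ih hw]
  | swap i j l => intro w hw; exact pd_comm (listDeriv_smooth hw l) j i
  | trans _ _ ih1 ih2 => intro w hw; rw [ih1 hw, ih2 hw]

theorem list_perm_canon {n : ℕ} (l : List (Fin n)) :
    l.Perm ((List.finRange n).flatMap fun i => List.replicate (l.count i) i) := by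
  rw [List.perm_iff_count]
  intro a
  rw [List.count_flatMap]
  have := Fin.sum_univ_def (fun i => List.count a (List.replicate (l.count i) i))
  simp only [Function.comp_def]
  rw [← this]
  simp [List.count_replicate]

theorem mdeg_count {n : ℕ} (l : List (Fin n)) : mdeg (fun i => l.count i) = l.length := by
  rw [(list_perm_canon l).length_eq, List.length_flatMap]
  simp only [List.length_replicate]
  rw [mdeg, Fin.sum_univ_def]

theorem listDeriv_eq_mderiv {n : ℕ} {w : Euc n → ℝ} (hw : ContDiff ℝ (⊤ : ℕ∞) w) (l : List (Fin n)) :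
    listDeriv l w = mderiv (fun i => l.count i) w := listDeriv_perm (list_perm_canon l) hw

theorem listDeriv_reflect {n : ℕ} {w : Euc n → ℝ} (hw : ContDiff ℝ (⊤ : ℕ∞) w) (x : Euc n)
    (l : List (Fin n)) :
    listDeriv l (fun y => w (x - y)) = fun y => (-1) ^ l.length * listDeriv l w (x - y) := by
  induction l with
  | nil => ext y; simp [listDeriv]
  | cons i l ih =>
    ext y
    have h1 : HasFDerivAt (fun y : Euc n => x - y) (-(ContinuousLinearMap.id ℝ (Euc n))) y :=
      (hasFDerivAt_id y).const_sub x
    have h2 := (((listDeriv_smooth hw l).differentiable (by simp)) (x - y)).hasFDerivAt.comp y h1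
    have h3 := h2.const_mul ((-1 : ℝ) ^ l.length)
    simp only [listDeriv]
    rw [ih]
    have h4 : fderiv ℝ (fun y => (-1) ^ l.length * listDeriv l w (x - y)) y = _ := h3.fderiv
    rw [h4]
    simp [pow_succ]

theorem hsum_le_of_list {n : ℕ} {w : Euc n → ℝ} {x : Euc n} {B : ℝ≥0∞} (j : ℕ) :
    ∀ l0 : List (Fin n), (∀ l : List (Fin n), l.length = j → ‖listDeriv (l ++ l0) w x‖ₑ ≤ B) →
    hsum j (listDeriv l0 w) x ≤ (n : ℝ≥0∞) ^ j * B := by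
  induction j with
  | zero => intro l0 h; simpa [hsum] using h [] rfl
  | succ j ih =>
    intro l0 h
    have : ∀ i, hsum j (listDeriv (i :: l0) w) x ≤ (n : ℝ≥0∞) ^ j * B := by
      intro i
      refine ih (i :: l0) fun l hl => ?_
      have := h (l ++ [i]) (by simp [hl])
      simpa using this
    calc _ ≤ ∑ _i : Fin n, (n : ℝ≥0∞) ^ j * B := Finset.sum_le_sum fun i _ => this i
      _ = _ := by simp [pow_succ]; ring

noncomputable def mol {n : ℕ} (u ψ : Euc n → ℝ) (x : Euc n) : ℝ := ∫ y, u y * ψ (x - y)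

theorem mol_eq {n : ℕ} (u ψ : Euc n → ℝ) :
    mol u ψ = convolution u ψ (ContinuousLinearMap.mul ℝ ℝ) volume := rfl

theorem mol_smooth {n : ℕ} {u ψ : Euc n → ℝ} (hu : LocallyIntegrable u)
    (hψ : ContDiff ℝ (⊤ : ℕ∞) ψ) (hc : HasCompactSupport ψ) : ContDiff ℝ (⊤ : ℕ∞) (mol u ψ) := by
  rw [mol_eq]
  exact hc.contDiff_convolution_right _ hu hψ

theorem pd_mol {n : ℕ} {u ψ : Euc n → ℝ} (hu : LocallyIntegrable u)
    (hψ : ContDiff ℝ (⊤ : ℕ∞) ψ) (hc : HasCompactSupport ψ) (i : Fin n) :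
    pd i (mol u ψ) = mol u (pd i ψ) := by
  ext x
  have h1 : ContDiff ℝ 1 ψ := hψ.of_le (by exact_mod_cast le_top)
  have := hc.hasFDerivAt_convolution_right (ContinuousLinearMap.mul ℝ ℝ) hu h1 x
  rw [mol_eq, pd, this.fderiv]
  rw [convolution_precompR_apply _ hu (hc.fderiv ℝ) (h1.continuous_fderiv (by simp))]
  rfl

theorem listDeriv_mol {n : ℕ} {u ψ : Euc n → ℝ} (hu : LocallyIntegrable u)
    (hψ : ContDiff ℝ (⊤ : ℕ∞) ψ) (hc : HasCompactSupport ψ) (l : List (Fin n)) :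
    listDeriv l (mol u ψ) = mol u (listDeriv l ψ) := by
  induction l with
  | nil => rfl
  | cons i l ih =>
    change pd i (listDeriv l (mol u ψ)) = _
    rw [ih, pd_mol hu (listDeriv_smooth hψ l) (listDeriv_compact hc l)]
    rfl

/-- Derivatives of the mollification are bounded by the mollification of the weak derivatives. -/
theorem listDeriv_mol_le {n : ℕ} {U : Set (Euc n)} (hU : MeasurableSet U) {u ψ g : Euc n → ℝ}
    {h : Euc n → ℝ≥0∞} (l : List (Fin n))
    (hu : IntegrableOn u U) (hψ : ContDiff ℝ (⊤ : ℕ∞) ψ) (hc : HasCompactSupport ψ)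
    (hg : IsWeakDerivOn U (fun i => l.count i) u g)
    (hgh : ∀ᵐ y ∂volume.restrict U, ‖g y‖ₑ ≤ h y) {x : Euc n}
    (hx : ∀ y, x - y ∈ tsupport ψ → y ∈ U) :
    ‖listDeriv l (mol (U.indicator u) ψ) x‖ₑ ≤ ∫⁻ y, h y * ‖ψ (x - y)‖ₑ := by
  have hli : LocallyIntegrable (U.indicator u) := (hu.integrable_indicator hU).locallyIntegrable
  rw [listDeriv_mol hli hψ hc]
  set η : Euc n → ℝ := fun y => ψ (x - y) with hη
  have hηs : ContDiff ℝ (⊤ : ℕ∞) η := hψ.comp (by fun_prop)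
  have hηc : HasCompactSupport η := hc.comp_homeomorph (Homeomorph.subLeft x)
  have hηt : tsupport η ⊆ U := by
    intro y hy
    apply hx
    exact tsupport_comp_subset_preimage ψ (f := fun y => x - y) (by fun_prop) hy
  have h1 := hg η hηs hηc hηt
  rw [← listDeriv_eq_mderiv hηs, listDeriv_reflect hψ, mdeg_count] at h1
  have h2 : mol (U.indicator u) (listDeriv l ψ) x = ∫ y in U, g y * η y := by
    have e : ∫ y in U, u y * ((-1) ^ l.length * listDeriv l ψ (x - y))
        = (-1) ^ l.length * mol (U.indicator u) (listDeriv l ψ) x := by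
      rw [mol, ← integral_indicator hU, ← integral_const_mul]
      congr 1; ext y
      by_cases hy : y ∈ U
      · simp [hy]; ring
      · simp [hy]
    rw [e] at h1
    exact mul_left_cancel₀ (pow_ne_zero _ (by norm_num)) h1
  rw [h2]
  calc _ ≤ ∫⁻ y in U, ‖g y * η y‖ₑ := enorm_integral_le_lintegral_enorm _
    _ ≤ ∫⁻ y in U, h y * ‖η y‖ₑ := by
        refine lintegral_mono_ae ?_
        filter_upwards [hgh] with y hy
        rw [enorm_mul]; gcongr
    _ ≤ _ := setLIntegral_le_lintegral _ _

theorem rpot_mono {n : ℕ} {a : ℝ} {h h' : Euc n → ℝ≥0∞} (H : ∀ x, h x ≤ h' x) (x : Euc n) :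
    rpot a h x ≤ rpot a h' x := lintegral_mono fun y => mul_le_mul_left (H y) _

theorem rpot_const_mul {n : ℕ} {a : ℝ} {h : Euc n → ℝ≥0∞} {c : ℝ≥0∞} (hc : c ≠ ∞) (x : Euc n) :
    rpot a (fun y => c * h y) x = c * rpot a h x := by
  unfold rpot
  rw [← lintegral_const_mul' _ _ hc]
  exact lintegral_congr fun y => by ring

theorem rpot_mol {n : ℕ} {a : ℝ} {C : ℝ≥0∞} {h : Euc n → ℝ≥0∞} (hh : Measurable h)
    (A1 : ∀ x r, 0 < r → ∫⁻ y in ball x r, rpot a h y ≤ C * volume (ball x r) * rpot a h x)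
    {ψ : Euc n → ℝ} (hψ : Continuous ψ) {r : ℝ} (hr : 0 < r) {Q : ℝ≥0∞} (hQ : Q ≠ ∞)
    (hb : ∀ z, ‖ψ z‖ₑ ≤ (ball (0 : Euc n) r).indicator (fun _ => Q * (volume (ball (0 : Euc n) r))⁻¹) z)
    (x : Euc n) :
    rpot a (fun x => ∫⁻ y, h y * ‖ψ (x - y)‖ₑ) x ≤ Q * C * rpot a h x := by
  have hm := measurable_rpot a hh
  have hψm : Measurable ψ := hψ.measurable
  set V := volume (ball (0 : Euc n) r) with hV
  have hV0 : V ≠ 0 := (measure_ball_pos _ _ hr).ne'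
  have hVt : V ≠ ∞ := measure_ball_lt_top.ne
  calc _ = ∫⁻ y', ∫⁻ z, h (y' - z) * ‖ψ z‖ₑ * ENNReal.ofReal (‖x - y'‖ ^ (a - (n : ℝ))) := by
        unfold rpot
        refine lintegral_congr fun y' => ?_
        rw [← lintegral_mul_const' _ _ ENNReal.ofReal_ne_top,
          ← lintegral_sub_left_eq_self _ y']
        simp only [sub_sub_cancel]
    _ = ∫⁻ z, ∫⁻ y', h (y' - z) * ‖ψ z‖ₑ * ENNReal.ofReal (‖x - y'‖ ^ (a - (n : ℝ))) := by
        refine lintegral_lintegral_swap (Measurable.aemeasurable ?_)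
        refine Measurable.mul (Measurable.mul (hh.comp (by fun_prop)) ?_) (by fun_prop)
        exact (hψm.comp measurable_snd).enorm
    _ = ∫⁻ z, ‖ψ z‖ₑ * rpot a h (x - z) := by
        refine lintegral_congr fun z => ?_
        unfold rpot
        rw [← lintegral_const_mul' _ _ enorm_ne_top, ← lintegral_add_right_eq_self _ z]
        refine lintegral_congr fun y => ?_
        rw [add_sub_cancel_right, show x - (y + z) = x - z - y by abel]
        ring
    _ ≤ ∫⁻ z, (ball (0 : Euc n) r).indicator (fun _ => Q * V⁻¹) z * rpot a h (x - z) :=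
        lintegral_mono fun z => mul_le_mul_left (hb z) _
    _ = ∫⁻ y, (ball (0 : Euc n) r).indicator (fun _ => Q * V⁻¹) (x - y) * rpot a h y := by
        rw [← lintegral_sub_left_eq_self _ x]
        simp only [sub_sub_cancel]
    _ = ∫⁻ y in ball x r, Q * V⁻¹ * rpot a h y := by
        rw [← lintegral_indicator measurableSet_ball]
        refine lintegral_congr fun y => ?_
        have : x - y ∈ ball (0 : Euc n) r ↔ y ∈ ball x r := by
          simp [dist_eq_norm, norm_sub_rev]
        by_cases hy : y ∈ ball x r
        · rw [indicator_of_mem hy, indicator_of_mem (this.2 hy)]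
        · rw [indicator_of_notMem hy, indicator_of_notMem (fun h => hy (this.1 h)), zero_mul]
    _ = Q * V⁻¹ * ∫⁻ y in ball x r, rpot a h y := lintegral_const_mul' _ _ (by finiteness)
    _ ≤ Q * V⁻¹ * (C * V * rpot a h x) := by
        refine mul_le_mul_right ?_ _
        rw [hV, ← Measure.addHaar_ball_center volume x r]
        exact A1 x r hr
    _ = Q * C * (V⁻¹ * V) * rpot a h x := by ring
    _ = _ := by rw [ENNReal.inv_mul_cancel hV0 hVt, mul_one]

theorem normed_bound {n : ℕ} (hn : 0 < n) (b : ContDiffBump (0 : Euc n)) (hb : b.rOut ≤ 2 * b.rIn) (z : Euc n) :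
    ‖b.normed volume z‖ₑ ≤ (ball (0 : Euc n) b.rOut).indicator
      (fun _ => 2 ^ n * (volume (ball (0 : Euc n) b.rOut))⁻¹) z := by
  have : Nonempty (Fin n) := ⟨⟨0, hn⟩⟩
  by_cases hz : z ∈ ball (0 : Euc n) b.rOut
  · rw [indicator_of_mem hz]
    have h1 := b.normed_le_div_measure_closedBall_rOut volume 2 hb z
    have hv : volume.real (closedBall (0 : Euc n) b.rOut) = (volume (ball (0 : Euc n) b.rOut)).toReal := by
      rw [Measure.real, Measure.addHaar_closedBall_eq_addHaar_ball]
    have hpos : 0 < (volume (ball (0 : Euc n) b.rOut)).toReal :=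
      ENNReal.toReal_pos (measure_ball_pos _ _ b.rOut_pos).ne' measure_ball_lt_top.ne
    rw [hv] at h1
    simp only [finrank_euclideanSpace, Fintype.card_fin] at h1
    rw [← ofReal_norm, Real.norm_of_nonneg (b.nonneg_normed z)]
    refine (ENNReal.ofReal_le_ofReal h1).trans (le_of_eq ?_)
    rw [ENNReal.ofReal_div_of_pos hpos, ENNReal.ofReal_toReal measure_ball_lt_top.ne, div_eq_mul_inv,
      ENNReal.ofReal_pow (by norm_num)]
    norm_num
  · rw [indicator_of_notMem hz]
    have : b.normed volume z = 0 := by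
      rw [← Function.notMem_support, b.support_normed_eq]; exact hz
    simp [this]

theorem sobolev_local {n m : ℕ} (hmn : m + 1 < n) (c : Euc n) {ρ : ℝ} (hρ : 0 < ρ)
    {h : Euc n → ℝ≥0∞} (hh : Measurable h) {u : Euc n → ℝ} (hu : IntegrableOn u (ball c (3 * ρ)))
    (hg : ∀ α : Fin n → ℕ, mdeg α ≤ m + 2 → ∃ g : Euc n → ℝ, IsWeakDerivOn (ball c (3 * ρ)) α u g ∧
      ∀ᵐ y ∂volume.restrict (ball c (3 * ρ)), ‖g y‖ₑ ≤ h y) :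
    ∃ K : ℝ≥0∞, K ≠ ∞ ∧ ∃ N : Set (Euc n), volume N = 0 ∧ ∀ x ∈ ball c ρ, ∀ y ∈ ball c ρ,
      x ∉ N → y ∉ N → ‖u x - u y‖ₑ ≤ K * ‖x - y‖ₑ *
        (rpot ((m + 1 : ℕ) : ℝ) h x + rpot ((m + 1 : ℕ) : ℝ) h y) := by
  have hn : 0 < n := by omega
  set U := ball c (3 * ρ) with hU
  set a : ℝ := ((m + 1 : ℕ) : ℝ) with ha
  have ha0 : 0 < a := by rw [ha]; positivity
  have han : a < n := by rw [ha]; exact_mod_cast hmn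
  obtain ⟨C, hC, A0⟩ := rpot_avg hn ha0 han
  have A1 := A0 h hh
  obtain ⟨C1, hC1, R⟩ := riesz_est hn m
  let χb : ContDiffBump c := ⟨ρ, 2 * ρ, hρ, by linarith⟩
  have hχs : ContDiff ℝ (⊤ : ℕ∞) (χb : Euc n → ℝ) := χb.contDiff
  have hχc : HasCompactSupport (χb : Euc n → ℝ) := χb.hasCompactSupport
  have hχt : tsupport (χb : Euc n → ℝ) = closedBall c (2 * ρ) := χb.tsupport_eq
  have hχ1 : ∀ x ∈ ball c ρ, χb x = 1 := fun x hx =>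
    χb.one_of_mem_closedBall (ball_subset_closedBall hx)
  obtain ⟨C2, hC2, L⟩ := hsum_mul (m + 2) hχs hχc
  set C3 : ℝ≥0∞ := C2 * ∑ l ∈ Finset.range (m + 2 + 1), (n : ℝ≥0∞) ^ l with hC3
  have hC3t : C3 ≠ ∞ := by
    rw [hC3]
    refine ENNReal.mul_ne_top hC2 ?_
    rw [Ne, ENNReal.sum_eq_top]
    push Not
    intro l _
    finiteness
  set M : ℝ≥0∞ := C1 * (C3 * (2 ^ n * C)) with hM
  have hMt : M ≠ ∞ := by rw [hM]; finiteness
  set G : Euc n → ℝ≥0∞ := fun x => M * rpot a h x with hG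
  have hGm : Measurable G := (measurable_rpot a hh).const_mul M
  have AG : ∀ x r, 0 < r → ∫⁻ y in ball x r, G y ≤ C * volume (ball x r) * G x := by
    intro x r hr
    rw [hG, lintegral_const_mul' _ _ hMt]
    calc _ ≤ M * (C * volume (ball x r) * rpot a h x) := mul_le_mul_right (A1 x r hr) _
      _ = _ := by ring
  have hli : LocallyIntegrable (U.indicator u) :=
    (hu.integrable_indicator measurableSet_ball).locallyIntegrable
  -- uniform estimate for mollifications
  have key : ∀ b : ContDiffBump (0 : Euc n), b.rOut ≤ 2 * b.rIn → b.rOut < ρ →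
      ∀ x ∈ ball c ρ, ∀ y ∈ ball c ρ,
        ‖mol (U.indicator u) (b.normed volume) x - mol (U.indicator u) (b.normed volume) y‖ₑ
          ≤ (2 ^ n * C) * ‖x - y‖ₑ * (G x + G y) := by
    intro b hb hbρ x hx y hy
    set ψ := b.normed volume with hψ
    have ψs : ContDiff ℝ (⊤ : ℕ∞) ψ := b.contDiff_normed
    have ψc : HasCompactSupport ψ := b.hasCompactSupport_normed
    set w := mol (U.indicator u) ψ with hw
    have ws : ContDiff ℝ (⊤ : ℕ∞) w := mol_smooth hli ψs ψc
    set hψf : Euc n → ℝ≥0∞ := fun x => ∫⁻ y, h y * ‖ψ (x - y)‖ₑ with hhψ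
    have s1 : ∀ x ∈ closedBall c (2 * ρ), ∀ j ≤ m + 2, hsum j w x ≤ (n : ℝ≥0∞) ^ j * hψf x := by
      intro x hx j hj
      refine hsum_le_of_list (w := w) j [] fun l hl => ?_
      rw [List.append_nil]
      obtain ⟨g, hg1, hg2⟩ := hg (fun i => l.count i) (by rw [mdeg_count]; omega)
      refine listDeriv_mol_le measurableSet_ball l hu ψs ψc hg1 hg2 fun y hy => ?_
      rw [hψ, b.tsupport_normed_eq] at hy
      have h1 : ‖x - y‖ ≤ b.rOut := by simpa using hy
      have h2 : dist x c ≤ 2 * ρ := hx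
      have h3 := dist_triangle_left y c x
      rw [dist_eq_norm x y] at h3
      exact mem_ball.2 (by linarith)
    have s2 : ∀ x, hsum (m + 2) ((χb : Euc n → ℝ) * w) x ≤ C3 * hψf x := by
      intro x
      by_cases hx : x ∈ closedBall c (2 * ρ)
      · refine (L w ws x).trans ?_
        rw [hC3, mul_assoc, Finset.sum_mul]
        refine mul_le_mul_right (Finset.sum_le_sum fun l hl => s1 x hx l ?_) _
        have := Finset.mem_range.1 hl
        omega
      · rw [hsum_zero_of_notMem]
        · exact zero_le
        · intro h'
          apply hx
          rw [← hχt]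
          exact tsupport_mul_subset_left h'
    have s3 : ∀ x, hsum 1 ((χb : Euc n → ℝ) * w) x ≤ G x := by
      intro x
      calc _ ≤ C1 * rpot a (hsum (m + 2) ((χb : Euc n → ℝ) * w)) x :=
            R _ (hχs.mul ws) hχc.mul_right x
        _ ≤ C1 * rpot a (fun x => C3 * hψf x) x := mul_le_mul_right (rpot_mono s2 x) _
        _ = C1 * (C3 * rpot a hψf x) := by rw [rpot_const_mul hC3t]
        _ ≤ C1 * (C3 * (2 ^ n * C * rpot a h x)) := by
            refine mul_le_mul_right (mul_le_mul_right ?_ _) _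
            exact rpot_mol hh A1 ψs.continuous b.rOut_pos (by finiteness) (normed_bound hn b hb) x
        _ = _ := by rw [hG, hM]; ring
    have := pointwise_est (hχs.mul ws) hGm AG s3 x y
    simpa [hχ1 x hx, hχ1 y hy] using this
  -- pass to the limit
  let φ : ℕ → ContDiffBump (0 : Euc n) := fun i =>
    ⟨ρ / (i + 2) / 2, ρ / (i + 2), by positivity, half_lt_self (by positivity)⟩
  have hφ0 : Tendsto (fun i => (φ i).rOut) atTop (𝓝 0) := by
    have h1 : Tendsto (fun i : ℕ => ρ / ((i : ℝ) + 2)) atTop (𝓝 0) :=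
      tendsto_const_nhds.div_atTop (tendsto_atTop_add_const_right _ _ tendsto_natCast_atTop_atTop)
    exact h1
  have hφ2 : ∀ i, (φ i).rOut ≤ 2 * (φ i).rIn := by
    intro i
    change ρ / (i + 2) ≤ 2 * (ρ / (i + 2) / 2)
    linarith
  have hφρ : ∀ i, (φ i).rOut < ρ := by
    intro i
    change ρ / (i + 2) < ρ
    rw [div_lt_iff₀ (by positivity)]
    nlinarith [(Nat.cast_nonneg i : (0:ℝ) ≤ i)]
  have hae := ContDiffBump.ae_convolution_tendsto_right_of_locallyIntegrable (μ := volume) hφ0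
    (Eventually.of_forall hφ2) hli
  have hconv : ∀ i x, (convolution ((φ i).normed volume) (U.indicator u)
      (ContinuousLinearMap.lsmul ℝ ℝ) volume) x = mol (U.indicator u) ((φ i).normed volume) x := by
    intro i x
    rw [convolution_eq_swap, mol]
    congr 1; ext t
    simp [mul_comm]
  simp only [hconv] at hae
  refine ⟨2 ^ n * C * M, by finiteness, _, ae_iff.1 hae, ?_⟩
  intro x hx y hy hxN hyN
  simp only [mem_ofPred_eq, not_not] at hxN hyN
  have hxU : x ∈ U := ball_subset_ball (by linarith) hx
  have hyU : y ∈ U := ball_subset_ball (by linarith) hy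
  rw [indicator_of_mem hxU] at hxN
  rw [indicator_of_mem hyU] at hyN
  have hlim := (hxN.sub hyN).enorm
  have := le_of_tendsto hlim (Eventually.of_forall fun i => key (φ i) (hφ2 i) (hφρ i) x hx y hy)
  refine this.trans (le_of_eq ?_)
  rw [hG]; ring

theorem local_data {n k : ℕ} {p : ℝ} (hp : 1 ≤ p) {U : Set (Euc n)} (hU : MeasurableSet U)
    {v : Fin n → Euc n → ℝ} (hv : ∀ i, MemSobolevOn k p U (v i)) :
    ∃ h : Euc n → ℝ≥0∞, Measurable h ∧ ∫⁻ y, h y ^ p ≠ ∞ ∧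
      ∀ i, ∀ α : Fin n → ℕ, mdeg α ≤ k → ∃ g : Euc n → ℝ, IsWeakDerivOn U α (v i) g ∧
        ∀ᵐ y ∂volume.restrict U, ‖g y‖ₑ ≤ h y := by
  have hp0 : 0 < p := by linarith
  have hex : ∀ i, ∀ α : Fin n → ℕ, ∃ g : Euc n → ℝ,
      MemLp g (ENNReal.ofReal p) (volume.restrict U) ∧ (mdeg α ≤ k → IsWeakDerivOn U α (v i) g) := by
    intro i α
    by_cases hα : mdeg α ≤ k
    · obtain ⟨g, h1, h2⟩ := (hv i).2 α hα
      exact ⟨g, h1, fun _ => h2⟩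
    · exact ⟨0, MemLp.zero, fun h => absurd h hα⟩
  choose g hg1 hg2 using hex
  set g' : Fin n → (Fin n → Fin (k + 1)) → Euc n → ℝ := fun i f =>
    (hg1 i (fun j => (f j : ℕ))).1.mk _ with hg'
  have hae : ∀ i f, g i (fun j => (f j : ℕ)) =ᵐ[volume.restrict U] g' i f := fun i f =>
    (hg1 i (fun j => (f j : ℕ))).1.ae_eq_mk
  have hg'm : ∀ i f, Measurable (g' i f) := fun i f =>
    (hg1 i (fun j => (f j : ℕ))).1.stronglyMeasurable_mk.measurable
  have hg'l : ∀ i f, MemLp (g' i f) (ENNReal.ofReal p) (volume.restrict U) := fun i f =>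
    (memLp_congr_ae (hae i f)).1 (hg1 i _)
  set s : Euc n → ℝ := fun y => ∑ i, ∑ f, ‖g' i f y‖ with hs
  have hsm : Measurable s := Finset.measurable_fun_sum _ fun i _ =>
    Finset.measurable_fun_sum _ fun f _ => (hg'm i f).norm
  have hsl : MemLp s (ENNReal.ofReal p) (volume.restrict U) :=
    memLp_finsetSum _ fun i _ => memLp_finsetSum _ fun f _ => (hg'l i f).norm
  refine ⟨U.indicator fun y => ‖s y‖ₑ, hsm.enorm.indicator hU, ?_, ?_⟩
  · have h1 := lintegral_rpow_enorm_lt_top_of_eLpNorm_lt_top (p := ENNReal.ofReal p)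
      (by simpa using hp0) ENNReal.ofReal_ne_top hsl.2
    rw [ENNReal.toReal_ofReal hp0.le, ← lintegral_indicator hU] at h1
    refine ne_of_eq_of_ne (lintegral_congr fun y => ?_) h1.ne
    by_cases hy : y ∈ U
    · simp [hy]
    · simp [hy, hp0]
  · intro i α hα
    refine ⟨g i α, hg2 i α hα, ?_⟩
    have hlt : ∀ j, α j < k + 1 := by
      intro j
      have : α j ≤ mdeg α := Finset.single_le_sum (f := α) (fun _ _ => Nat.zero_le _) (Finset.mem_univ j)
      omega
    have h1 := hae i (fun j => ⟨α j, hlt j⟩)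
    filter_upwards [h1, ae_restrict_mem hU] with y hy hyU
    rw [indicator_of_mem hyU]
    have hy' : g i α y = g' i (fun j => ⟨α j, hlt j⟩) y := hy
    rw [hy', ← ofReal_norm, ← ofReal_norm]
    apply ENNReal.ofReal_le_ofReal
    have s0 : 0 ≤ s y := Finset.sum_nonneg fun i _ => Finset.sum_nonneg fun f _ => norm_nonneg _
    rw [Real.norm_of_nonneg s0]
    calc _ ≤ ∑ f, ‖g' i f y‖ :=
          Finset.single_le_sum (f := fun f => ‖g' i f y‖) (fun _ _ => norm_nonneg _) (Finset.mem_univ _)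
      _ ≤ _ := Finset.single_le_sum (f := fun i => ∑ f, ‖g' i f y‖)
          (fun _ _ => Finset.sum_nonneg fun f _ => norm_nonneg _) (Finset.mem_univ _)

theorem local_final {n m : ℕ} {p : ℝ} (hp : 1 ≤ p) (hmn : m + 1 < n) {Ω : Set (Euc n)}
    {φ : Euc n → Euc n} (hφ : ∀ i : Fin n, MemSobolevLoc (m + 2) p Ω (fun x => φ x i))
    {c : Euc n} {ρ : ℝ} (hρ : 0 < ρ) (hc : closedBall c (3 * ρ) ⊆ Ω) :
    ∃ h : Euc n → ℝ≥0∞, Measurable h ∧ ∫⁻ y, h y ^ p ≠ ∞ ∧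
      ∀ N : ℕ, ∃ L, LipschitzOnWith L (preciseRepV φ)
        (ball c ρ ∩ {x | rpot ((m + 1 : ℕ) : ℝ) h x ≤ N}) := by
  have hn : 0 < n := by omega
  have hS : ∀ i : Fin n, MemSobolevOn (m + 2) p (ball c (3 * ρ)) (fun x => φ x i) := fun i =>
    hφ i _ isOpen_ball isBounded_ball (closure_ball_subset_closedBall.trans hc)
  obtain ⟨h, hh, hfin, hg⟩ := local_data hp measurableSet_ball hS
  refine ⟨h, hh, hfin, fun N => ?_⟩
  have hfm : IsFiniteMeasure (volume.restrict (ball c (3 * ρ))) := ⟨by simpa using measure_ball_lt_top⟩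
  have hint : ∀ i, IntegrableOn (fun x => φ x i) (ball c (3 * ρ)) := fun i =>
    (hS i).1.integrable (by simpa using hp)
  choose K hK Z hZ H using fun i => sobolev_local hmn c hρ hh (hint i) (hg i)
  obtain ⟨C, hC, A0⟩ := rpot_avg (n := n) (a := ((m + 1 : ℕ) : ℝ)) hn (by positivity) (by exact_mod_cast hmn)
  refine preciseRep_lip (measurable_rpot _ hh) hC (K := ∑ i, K i) (by simp [hK]) (A0 h hh) isOpen_ball
    (N := ⋃ i, Z i) ?_ (measure_iUnion_null hZ) ?_ N
  · have : IntegrableOn φ (ball c (3 * ρ)) := Integrable.of_eval_piLp hint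
    exact this.mono_set (ball_subset_ball (by linarith))
  · intro x hx y hy hxN hyN
    simp only [mem_iUnion, not_exists] at hxN hyN
    have e : φ x - φ y = ∑ i, EuclideanSpace.single i (φ x i - φ y i) := by
      ext j
      simp [Finset.sum_apply, Pi.single_apply]
    calc ‖φ x - φ y‖ₑ ≤ ∑ i, ‖φ x i - φ y i‖ₑ := by
          rw [e]
          refine (enorm_sum_le _ _).trans (Finset.sum_le_sum fun i _ => ?_)
          rw [← ofReal_norm, ← ofReal_norm]
          simp
      _ ≤ ∑ i, K i * ‖x - y‖ₑ * (rpot ((m + 1 : ℕ) : ℝ) h x + rpot ((m + 1 : ℕ) : ℝ) h y) :=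
          Finset.sum_le_sum fun i _ => H i x hx y hy (hxN i) (hyN i)
      _ = _ := by rw [Finset.sum_mul, Finset.sum_mul]

/-- Theorem 1.2, the area formula for `W^{k,p}_loc` mappings. -/
theorem area_formula_sobolev {n k : ℕ} {p : ℝ}
    (hk : 1 < k) (hp : 1 ≤ p) (hkpn : ((k : ℝ) - 1) * p < n)
    (Ω : Set (Euc n)) (hΩ : IsOpen Ω)
    (φ : Euc n → Euc n)
    (hφ : ∀ i : Fin n, MemSobolevLoc k p Ω (fun x => (WithLp.equiv 2 (Fin n → ℝ)) (φ x) i)) :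
    ∃ S ⊆ Ω, rieszCap ((k : ℝ) - 1) p S = 0 ∧
      ∃ Dφ : Euc n → (Euc n →L[ℝ] Euc n),
        (∀ᵐ x ∂(volume.restrict (Ω \ S)),
          HasApproxDerivAt (Ω \ S) (preciseRepV φ) (Dφ x) x) ∧
        ∀ f : Euc n → ℝ, Measurable (Ω.restrict f) → (∀ x ∈ Ω, 0 ≤ f x) →
          ∫⁻ x in Ω, ENNReal.ofReal (f x) * ENNReal.ofReal |(Dφ x).det| =
            ∫⁻ y, ∑' x : ↥(preciseRepV φ ⁻¹' {y} ∩ (Ω \ S)), ENNReal.ofReal (f ↑x) := by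
  obtain ⟨m, rfl⟩ : ∃ m, k = m + 2 := ⟨k - 2, by omega⟩
  have ek : ((m + 2 : ℕ) : ℝ) - 1 = ((m + 1 : ℕ) : ℝ) := by push_cast; ring
  rw [ek] at hkpn ⊢
  have hmn : m + 1 < n := by
    have h1 : ((m + 1 : ℕ) : ℝ) ≤ ((m + 1 : ℕ) : ℝ) * p := le_mul_of_one_le_right (by positivity) hp
    exact_mod_cast h1.trans_lt hkpn
  have hn : 0 < n := by omega
  rcases Ω.eq_empty_or_nonempty with rfl | hne
  · obtain ⟨D, hD1, hD2⟩ := area_abstract (S := ∅) hn hΩ (v := preciseRepV φ) (E := fun _ => ∅)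
      (fun _ => MeasurableSet.empty) (fun _ => Subset.rfl) (fun _ => ⟨0, by simp⟩) (by simp)
    refine ⟨∅, Subset.rfl, ?_, D, hD1, fun f hf _ => hD2 f hf⟩
    exact rieszCap_zero hp (h := fun _ _ => 0) (fun _ => measurable_const)
      (fun _ => by simp [(by linarith : 0 < p)]) (by simp)
  have hr : ∀ x : Euc n, ∃ ρ : ℝ, x ∈ Ω → 0 < ρ ∧ closedBall x (3 * ρ) ⊆ Ω := by
    intro x
    by_cases hx : x ∈ Ω
    · obtain ⟨r, hr, hb⟩ := Metric.nhds_basis_closedBall.mem_iff.1 (hΩ.mem_nhds hx)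
      exact ⟨r / 3, fun _ => ⟨by positivity, by rwa [mul_div_cancel₀ _ (by norm_num)]⟩⟩
    · exact ⟨0, fun h => absurd h hx⟩
  choose ρ hρ using hr
  obtain ⟨t, htΩ, htc, hcov⟩ := TopologicalSpace.countable_cover_nhdsWithin
    (s := Ω) (f := fun x => ball x (ρ x))
    (fun x hx => mem_nhdsWithin_of_mem_nhds (ball_mem_nhds x (hρ x hx).1))
  have htne : t.Nonempty := by
    obtain ⟨x, hx⟩ := hne
    obtain ⟨y, hy, -⟩ := mem_iUnion₂.1 (hcov hx)
    exact ⟨y, hy⟩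
  obtain ⟨c, rfl⟩ := htc.exists_eq_range htne
  have hcΩ : ∀ j, c j ∈ Ω := fun j => htΩ (mem_range_self j)
  choose h hh hfin hL using fun j => local_final hp hmn hφ (hρ _ (hcΩ j)).1 (hρ _ (hcΩ j)).2
  set E : ℕ → Set (Euc n) := fun q => ball (c q.unpair.1) (ρ (c q.unpair.1)) ∩
    {x | rpot ((m + 1 : ℕ) : ℝ) (h q.unpair.1) x ≤ (q.unpair.2 : ℕ)} with hE
  obtain ⟨D, hD1, hD2⟩ := area_abstract (S := Ω \ ⋃ q, E q) hn hΩ (v := preciseRepV φ) (E := E)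
    (fun q => measurableSet_ball.inter (measurableSet_le (measurable_rpot _ (hh _)) measurable_const))
    (fun q => inter_subset_left.trans (ball_subset_closedBall.trans ((closedBall_subset_closedBall
      (by have := (hρ _ (hcΩ q.unpair.1)).1; linarith)).trans (hρ _ (hcΩ q.unpair.1)).2)))
    (fun q => hL _ _) rfl
  refine ⟨Ω \ ⋃ q, E q, sdiff_subset, ?_, D, hD1, fun f hf _ => hD2 f hf⟩
  refine rieszCap_zero hp hh hfin ?_
  intro x hx
  obtain ⟨y, ⟨j, rfl⟩, hxj⟩ := mem_iUnion₂.1 (hcov hx.1)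
  refine ⟨j, ?_⟩
  by_contra hne'
  obtain ⟨N, hN⟩ := ENNReal.exists_nat_gt hne'
  apply hx.2
  refine mem_iUnion.2 ⟨Nat.pair j N, ?_⟩
  simp only [hE, Nat.unpair_pair]
  exact ⟨hxj, hN.le⟩
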